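/- arXiv:2403.02986 — 8 statements merged into one kernel-verified Lean document; each statement's English description precedes it below -/
import Mathlib

section
/- Let α ∈ S_n be a quasi-diagram. Then every orbit of the permutation ζα on {1,…,n} contains 1 or an isolated point of α if and only if every orbit of the permutation αζ on {1,…,n} contains n or an isolated point of α. (In particular, regularity of α can be tested by either condition.) -/
/-!
Conjugation by `α` turns `ζα` into `αζ`, so `α` carries the orbits of `ζα` onto those of `αζ`. It
fixes the isolated points, and it sends the point `1` into the `αζ`-orbit of `n`, since
`α 1 = (αζ) n`.
-/

section

variable {X : Type*} (f g : Equiv.Perm X)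

theorem sameCycle_mul_comm_iff {x y : X} :
    (f * g).SameCycle x y ↔ (g * f).SameCycle (g x) (g y) := by
  have conj_eq : g * (f * g) * g⁻¹ = g * f := by group
  rw [← conj_eq, Equiv.Perm.sameCycle_conj, Equiv.Perm.inv_def, g.symm_apply_apply,
    g.symm_apply_apply]

theorem sameCycle_mul_apply_right {x y : X} :
    (f * g).SameCycle x (f y) ↔ (g * f).SameCycle (g x) y :=
  (sameCycle_mul_comm_iff f g).trans (Equiv.Perm.sameCycle_apply_right (f := g * f))

theorem exists_sameCycle_mul_comm_iff (p : X → Prop) (x : X) :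
    (∃ y, (f * g).SameCycle x y ∧ (p y ∨ g y = y)) ↔
      ∃ y, (g * f).SameCycle (g x) y ∧ (p (f y) ∨ g y = y) := by
  have marked : (∃ y, (f * g).SameCycle x y ∧ p y) ↔
      ∃ y, (g * f).SameCycle (g x) y ∧ p (f y) :=
    (f.exists_congr fun _ => and_congr_left' (sameCycle_mul_apply_right f g).symm).symm
  have fixed : (∃ y, (f * g).SameCycle x y ∧ g y = y) ↔
      ∃ y, (g * f).SameCycle (g x) y ∧ g y = y :=
    exists_congr fun _ => and_congr_left fun hy => by rw [sameCycle_mul_comm_iff, hy]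
  simp only [and_or_left, exists_or, marked, fixed]

theorem stmt_1_general (p : X → Prop) :
    (∀ x, ∃ y, (f * g).SameCycle x y ∧ (p y ∨ g y = y)) ↔
      ∀ x, ∃ y, (g * f).SameCycle x y ∧ (p (f y) ∨ g y = y) :=
  g.forall_congr (exists_sameCycle_mul_comm_iff f g p)

end

theorem finRotate_eq_first_iff {n : ℕ} (hn : 0 < n) {i : Fin n} :
    finRotate n i = ⟨0, hn⟩ ↔ i = ⟨n - 1, Nat.sub_one_lt_of_lt hn⟩ := by
  have finRotate_last_eq : finRotate n ⟨n - 1, Nat.sub_one_lt_of_lt hn⟩ = ⟨0, hn⟩ := by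
    obtain ⟨m, rfl⟩ := Nat.exists_eq_add_one.mpr hn
    exact finRotate_last
  rw [← finRotate_last_eq, (finRotate n).apply_eq_iff_eq]

/-- Let `α ∈ S_n` be a quasi-diagram (an involution of `Fin n`, 0-indexed, so
the point `1` is `⟨0, _⟩` and the point `n` is `⟨n-1, _⟩`; `ζ = finRotate n` is the cycle
`(1 2 ⋯ n)`).  Then every orbit of `ζα` contains `1` or an isolated point of `α` iff every
orbit of `αζ` contains `n` or an isolated point of `α`. -/
theorem stmt_1 (n : ℕ) (hn : 0 < n) (α : Equiv.Perm (Fin n))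
    (hα : ∀ i, α (α i) = i) :
    (∀ x : Fin n, ∃ y : Fin n,
        (finRotate n * α).SameCycle x y ∧ (y = ⟨0, hn⟩ ∨ α y = y)) ↔
      (∀ x : Fin n, ∃ y : Fin n,
        (α * finRotate n).SameCycle x y ∧ (y = ⟨n - 1, by omega⟩ ∨ α y = y)) := by
  simpa only [finRotate_eq_first_iff] using stmt_1_general (finRotate n) α (· = ⟨0, hn⟩)
end

section
/- Let α ∈ S_n be a regular quasi-diagram. Then: (a) for every j ∈ {1,…,n−1} there exists a smallest positive integer g_j such that (αζ)^{g_j}(j) = n or (αζ)^{g_j}(j) is an isolated point of α (set g_n = 0); (b) for every i ∈ {1,…,n} with i ≠ α(n) there exists a smallest positive integer d_i such that (ζα)^{d_i}(i) = α(n) or (ζα)^{d_i}(i) is an isolated point of α (set d_{α(n)} = 0); and (c) max{ g_j : j is an isolated point of α or j = α(1) } = max{ d_i : i is an isolated point of α or i = 1 }. -/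
/-!
Since `αζ = α(ζα)α⁻¹`, the map `α` carries each `ζα`-orbit step by step onto an `αζ`-orbit. It also
preserves the isolated points and sends `p = α⁻¹(n)` to `n`, so `g_{α(i)} = d_i` for every `i`. As
`α` sends `1` to `α(1)`, both maxima in (c) range over the same numbers. The times exist because
`ζα(p) = 1`: an orbit through `1` also passes through `p`.
-/

section ReturnTimes

variable {X Y : Type*} {f : X → X} {g : Y → Y} {φ : X → Y}

/-- The positive times at which the orbit of `x` under `f` is in `S`. -/
def returnTimes (f : X → X) (S : Set X) (x : X) : Set ℕ :=
  {m | 0 < m ∧ f^[m] x ∈ S}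

theorem returnTimes_semiconj (h : Function.Semiconj φ f g) (S : Set Y) (x : X) :
    returnTimes g S (φ x) = returnTimes f (φ ⁻¹' S) x := by
  ext m
  simp only [returnTimes, Set.mem_ofPred_eq, Set.mem_preimage, (h.iterate_right m).eq]

open Classical in
/-- The first positive time at which the orbit of `x` under `f` meets `p` or `S`, reset to `0` at
`x = p`. These are the numbers `g_j` and `d_i`, with `S` the set of isolated points; the value is
the junk `sInf ∅ = 0` if the orbit never arrives. -/
noncomputable def arrivalTime (f : X → X) (p : X) (S : Set X) (x : X) : ℕ :=
  if x = p then 0 else sInf (returnTimes f (insert p S) x)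

theorem arrivalTime_self (f : X → X) (p : X) (S : Set X) : arrivalTime f p S p = 0 :=
  if_pos rfl

theorem isLeast_arrivalTime {p x : X} {S : Set X} (hx : x ≠ p)
    (h : (returnTimes f (insert p S) x).Nonempty) :
    IsLeast (returnTimes f (insert p S) x) (arrivalTime f p S x) := by
  rw [arrivalTime, if_neg hx]
  exact ⟨Nat.sInf_mem h, fun _ => Nat.sInf_le⟩

theorem preimage_insert_of_injective (hφ : Function.Injective φ) (p : X) (S : Set Y) :
    φ ⁻¹' insert (φ p) S = insert p (φ ⁻¹' S) := by
  ext x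
  simp only [Set.mem_preimage, Set.mem_insert_iff, hφ.eq_iff]

theorem arrivalTime_semiconj (h : Function.Semiconj φ f g) (hφ : Function.Injective φ)
    (p : X) (S : Set Y) (x : X) :
    arrivalTime g (φ p) S (φ x) = arrivalTime f p (φ ⁻¹' S) x := by
  simp only [arrivalTime, returnTimes_semiconj h, preimage_insert_of_injective hφ]
  classical exact if_congr hφ.eq_iff rfl rfl

end ReturnTimes

section Permutations

open Equiv

variable {X Y : Type*}

theorem returnTimes_nonempty_of_sameCycle [Finite X] {σ : Perm X} {S : Set X} {x y : X}
    (hxy : σ.SameCycle x y) (hy : y ∈ S) : (returnTimes σ S x).Nonempty := by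
  obtain ⟨m, hm, -, rfl⟩ := hxy.exists_pow_eq''
  exact ⟨m, hm, by rwa [Perm.iterate_eq_pow]⟩

theorem returnTimes_insert_nonempty_of_sameCycle [Finite X] {σ : Perm X} {S : Set X} {p x y : X}
    (hxy : σ.SameCycle x y) (hy : y ∈ insert (σ p) S) :
    (returnTimes σ (insert p S) x).Nonempty := by
  obtain rfl | hyS := hy
  · exact returnTimes_nonempty_of_sameCycle (Perm.sameCycle_apply_right.mp hxy)
      (Set.mem_insert p S)
  · exact returnTimes_nonempty_of_sameCycle hxy (Set.mem_insert_of_mem p hyS)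

theorem preimage_fixedPoints_self {f : X → X} (hf : Function.Injective f) :
    f ⁻¹' Function.fixedPoints f = Function.fixedPoints f :=
  Set.ext fun _ => hf.isFixedPt_apply_iff

theorem sup_filter_univ_comp_equiv {L : Type*} [SemilatticeSup L] [OrderBot L] [Fintype X]
    [Fintype Y] (e : X ≃ Y) (P : Y → Prop) [DecidablePred P] (F : Y → L) :
    (Finset.univ.filter fun x => P (e x)).sup (F ∘ e) = (Finset.univ.filter P).sup F := by
  rw [← Finset.map_univ_equiv e, Finset.filter_map, Finset.sup_map]
  rfl

end Permutations

theorem stmt_4_general {X : Type*} [Fintype X] [DecidableEq X] (ζ α : Equiv.Perm X)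
    {first last p : X} (hfirst : ζ last = first) (hp : α p = last)
    (hreg : ∀ x, ∃ y, (ζ * α).SameCycle x y ∧ (y = first ∨ α y = y)) :
    ∃ G D : X → ℕ,
      G last = 0 ∧
      (∀ j, j ≠ last →
        IsLeast {m | 0 < m ∧ (((α * ζ) ^ m) j = last ∨
          α (((α * ζ) ^ m) j) = ((α * ζ) ^ m) j)} (G j)) ∧
      D p = 0 ∧
      (∀ i, i ≠ p →
        IsLeast {m | 0 < m ∧ (((ζ * α) ^ m) i = p ∨
          α (((ζ * α) ^ m) i) = ((ζ * α) ^ m) i)} (D i)) ∧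
      (Finset.univ.filter fun j => α j = j ∨ j = α first).sup G =
        (Finset.univ.filter fun i => α i = i ∨ i = first).sup D := by
  subst hp hfirst
  let isolated := Function.fixedPoints α
  have hconj : Function.Semiconj α (ζ * α) (α * ζ) := fun _ => rfl
  have hisolated : α ⁻¹' isolated = isolated := preimage_fixedPoints_self α.injective
  have hD (i : X) : (returnTimes (ζ * α) (insert p isolated) i).Nonempty := by
    obtain ⟨y, hiy, hy⟩ := hreg i
    exact returnTimes_insert_nonempty_of_sameCycle hiy hy
  have hG : ∀ j, (returnTimes (α * ζ) (insert (α p) isolated) j).Nonempty :=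
    α.surjective.forall.2 fun i => by
      rw [returnTimes_semiconj hconj, preimage_insert_of_injective α.injective, hisolated]
      exact hD i
  have hGD : arrivalTime (α * ζ) (α p) isolated ∘ α = arrivalTime (ζ * α) p isolated := by
    ext i
    rw [Function.comp_apply, arrivalTime_semiconj hconj α.injective, hisolated]
  simp only [← Equiv.Perm.iterate_eq_pow]
  refine ⟨_, _, arrivalTime_self _ _ isolated, fun j hj => isLeast_arrivalTime hj (hG j),
    arrivalTime_self _ _ isolated, fun i hi => isLeast_arrivalTime hi (hD i), ?_⟩
  rw [← sup_filter_univ_comp_equiv α, hGD]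
  simp only [α.apply_eq_iff_eq]

/-- Let `α ∈ S_n` be a regular quasi-diagram (an involution of `Fin n`,
0-indexed: point `1` is `⟨0, _⟩`, point `n` is `⟨n-1, _⟩`; `ζ = finRotate n`; regular means
every orbit of `ζα` contains `1` or an isolated point of `α`).  Then:
(a) for every `j ≠ n` there is a smallest positive integer `G j` with `(αζ)^(G j) j = n` or
an isolated point of `α`, and `G n = 0`;
(b) for every `i ≠ α n` there is a smallest positive integer `D i` with `(ζα)^(D i) i = α n`
or an isolated point of `α`, and `D (α n) = 0`;
(c) `max { G j : j isolated or j = α 1 } = max { D i : i isolated or i = 1 }`. -/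
theorem stmt_4 (n : ℕ) (hn : 0 < n) (α : Equiv.Perm (Fin n))
    (hα : ∀ i, α (α i) = i)
    (hreg : ∀ x : Fin n, ∃ y : Fin n,
      (finRotate n * α).SameCycle x y ∧ (y = ⟨0, hn⟩ ∨ α y = y)) :
    ∃ G D : Fin n → ℕ,
      G ⟨n - 1, by omega⟩ = 0 ∧
      (∀ j : Fin n, j ≠ ⟨n - 1, by omega⟩ →
        0 < G j ∧
        (((α * finRotate n) ^ G j) j = ⟨n - 1, by omega⟩ ∨
          α (((α * finRotate n) ^ G j) j) = ((α * finRotate n) ^ G j) j) ∧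
        (∀ m : ℕ, 0 < m →
          (((α * finRotate n) ^ m) j = ⟨n - 1, by omega⟩ ∨
            α (((α * finRotate n) ^ m) j) = ((α * finRotate n) ^ m) j) →
          G j ≤ m)) ∧
      D (α ⟨n - 1, by omega⟩) = 0 ∧
      (∀ i : Fin n, i ≠ α ⟨n - 1, by omega⟩ →
        0 < D i ∧
        (((finRotate n * α) ^ D i) i = α ⟨n - 1, by omega⟩ ∨
          α (((finRotate n * α) ^ D i) i) = ((finRotate n * α) ^ D i) i) ∧
        (∀ m : ℕ, 0 < m →
          (((finRotate n * α) ^ m) i = α ⟨n - 1, by omega⟩ ∨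
            α (((finRotate n * α) ^ m) i) = ((finRotate n * α) ^ m) i) →
          D i ≤ m)) ∧
      (Finset.univ.filter fun j : Fin n => α j = j ∨ j = α ⟨0, hn⟩).sup G =
        (Finset.univ.filter fun i : Fin n => α i = i ∨ i = ⟨0, hn⟩).sup D := by
  obtain _ | n := n
  · exact absurd hn (lt_irrefl 0)
  · simpa only [IsLeast, mem_lowerBounds, Set.mem_ofPred_eq, and_imp, and_assoc,
      Nat.add_sub_cancel] using
      stmt_4_general (finRotate (n + 1)) α finRotate_last' (hα ⟨n, by omega⟩) hreg
end

section
/- Let α ∈ S_n be a quasi-diagram and let γ ∈ S_n be the reflection γ(i) = n+1−i. Then α is regular if and only if the quasi-diagram γαγ^{−1} is regular. -/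
/-!
The reflection `γ` inverts the rotation `ζ`, so `γ * α` conjugates `ζ * α` to the inverse of
`ζ * (γ * α⁻¹ * γ⁻¹)` and `α⁻¹` to `γ * α⁻¹ * γ⁻¹`. It therefore carries orbits to orbits and
isolated points to isolated points. It may move the base point `p`, but its value `γ (α p)` there
is sent by `ζ * (γ * α⁻¹ * γ⁻¹)` to `ζ (γ p) = p`, so it lies in the orbit of `p`.
-/

theorem mul_inv_conj_inv_eq_conj {G : Type*} [Group G] {g z : G} (h : SemiconjBy g z z⁻¹)
    (a : G) : (z * (g * a⁻¹ * g⁻¹))⁻¹ = (g * a) * (z * a) * (g * a)⁻¹ := by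
  have hinv : g⁻¹ * z⁻¹ = z * g⁻¹ := SemiconjBy.inv_symm_left_iff.2 h
  calc (z * (g * a⁻¹ * g⁻¹))⁻¹ = g * a * (g⁻¹ * z⁻¹) := by group
    _ = g * a * (z * g⁻¹) := by rw [hinv]
    _ = (g * a) * (z * a) * (g * a)⁻¹ := by group

section IsRegularDiagram

open Equiv.Perm (sameCycle_apply_right sameCycle_conj sameCycle_inv)

variable {X : Type*} {ζ γ α : Equiv.Perm X} {p : X}

/-- Regularity of a permutation `α` relative to a rotation `ζ` and a base point `p`: every orbit
of `ζ * α` contains `p` or an isolated point of `α`. A regular quasi-diagram is the case where `α`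
is an involution of `Fin n`, `ζ` is `finRotate n` and `p` is the first point; here `ζ` and `α` are
arbitrary. -/
def IsRegularDiagram (ζ : Equiv.Perm X) (p : X) (α : Equiv.Perm X) : Prop :=
  ∀ x, ∃ y, (ζ * α).SameCycle x y ∧ (y = p ∨ α y = y)

theorem isRegularDiagram_iff : IsRegularDiagram ζ p α ↔
    ∀ x, (ζ * α).SameCycle x p ∨ ∃ y, (ζ * α).SameCycle x y ∧ α y = y := by
  simp only [IsRegularDiagram, and_or_left, exists_or, exists_eq_right]

theorem sameCycle_mul_inv_conj_iff (hγ : SemiconjBy γ ζ ζ⁻¹) {x y : X} :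
    (ζ * (γ * α⁻¹ * γ⁻¹)).SameCycle ((γ * α) x) ((γ * α) y) ↔ (ζ * α).SameCycle x y := by
  rw [← sameCycle_inv, mul_inv_conj_inv_eq_conj hγ, sameCycle_conj,
    Equiv.Perm.coe_inv, Equiv.symm_apply_apply, Equiv.symm_apply_apply]

/-- The inverse cannot be dropped: if `α = ζ` is a 3-cycle, then `α` is regular, but
`γ * α * γ⁻¹ = ζ⁻¹` is not. -/
theorem stmt_5_general (hγ : SemiconjBy γ ζ ζ⁻¹) (hp : ζ (γ p) = p) (α : Equiv.Perm X) :
    IsRegularDiagram ζ p α ↔ IsRegularDiagram ζ p (γ * α⁻¹ * γ⁻¹) := by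
  have conj_apply (x : X) : (γ * α⁻¹ * γ⁻¹) ((γ * α) x) = γ x := by simp
  have base_point : (ζ * (γ * α⁻¹ * γ⁻¹)) ((γ * α) p) = p := by
    rw [Equiv.Perm.mul_apply ζ, conj_apply, hp]
  have isolated (y : X) : α y = y ↔ (γ * α⁻¹ * γ⁻¹) ((γ * α) y) = (γ * α) y := by
    rw [conj_apply, Equiv.Perm.mul_apply, γ.apply_eq_iff_eq, eq_comm]
  rw [isRegularDiagram_iff, isRegularDiagram_iff]
  refine (γ * α).forall_congr fun x ↦ or_congr ?_ ?_
  · rw [← sameCycle_mul_inv_conj_iff hγ, ← sameCycle_apply_right, base_point]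
  · exact (γ * α).exists_congr fun y ↦
      and_congr (sameCycle_mul_inv_conj_iff hγ).symm (isolated y)

end IsRegularDiagram

theorem semiconjBy_revPerm_finRotate (n : ℕ) :
    SemiconjBy Fin.revPerm (finRotate n) (finRotate n)⁻¹ := by
  rw [SemiconjBy, eq_inv_mul_iff_mul_eq]
  ext1 i
  cases n with
  | zero => exact i.elim0
  | succ m =>
    simp only [Equiv.Perm.mul_apply, Fin.revPerm_apply, finRotate_apply, ← Fin.last_sub,
      sub_add_eq_sub_sub, sub_add_cancel]

theorem finRotate_revPerm_zero {n : ℕ} (hn : 0 < n) :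
    finRotate n (Fin.revPerm ⟨0, hn⟩) = ⟨0, hn⟩ := by
  cases n with
  | zero => cases hn
  | succ m => exact (congrArg (finRotate (m + 1)) (Fin.rev_zero m)).trans finRotate_last

/-- Let `α ∈ S_n` be a quasi-diagram (an involution of `Fin n`, 0-indexed:
point `1` is `⟨0, _⟩`; `ζ = finRotate n`), and let `γ` be the reflection `γ(i) = n+1-i`
(0-indexed: `Fin.revPerm`, `j ↦ n-1-j`).  Then `α` is regular (every orbit of `ζα` contains
`1` or an isolated point of `α`) iff `γαγ⁻¹` is regular. -/
theorem stmt_5 (n : ℕ) (hn : 0 < n) (α : Equiv.Perm (Fin n))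
    (hα : ∀ i, α (α i) = i) :
    (∀ x : Fin n, ∃ y : Fin n,
        (finRotate n * α).SameCycle x y ∧ (y = ⟨0, hn⟩ ∨ α y = y)) ↔
      (∀ x : Fin n, ∃ y : Fin n,
        (finRotate n * (Fin.revPerm * α * Fin.revPerm⁻¹)).SameCycle x y ∧
          (y = ⟨0, hn⟩ ∨
            (Fin.revPerm * α * Fin.revPerm⁻¹ : Equiv.Perm (Fin n)) y = y)) := by
  have hα_inv : α⁻¹ = α := inv_eq_of_mul_eq_one_left (Equiv.ext hα)
  have h := stmt_5_general (semiconjBy_revPerm_finRotate n) (finRotate_revPerm_zero hn) α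
  rwa [hα_inv] at h
end

section
/- Let α ∈ S_n be a quasi-diagram. Then α is rotatably regular if and only if either α is maximal, or every orbit of ζα on {1,…,n} contains at least one isolated point of α. -/
/-- `β` is regular with respect to the distinguished point `p` (the point "1"): every orbit of
`ζβ` contains `p` or an isolated point of `β`. -/
def RegularAt {n : ℕ} (β : Equiv.Perm (Fin n)) (p : Fin n) : Prop :=
  ∀ x : Fin n, ∃ y : Fin n, (finRotate n * β).SameCycle x y ∧ (y = p ∨ β y = y)

/-!
Rotating `α` by `ζ^l` amounts to moving the distinguished point to `ζ^(-l) 1`, because `ζ^l`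
commutes with `ζ`. As `ζ` is transitive, `α` is rotatably regular iff it is regular with respect
to every point. If some orbit of `ζα` has no isolated point, regularity with respect to each point
`p` forces `p` into that orbit, which is therefore everything.
-/

open Equiv Equiv.Perm

theorem sameCycle_finRotate {n : ℕ} (x y : Fin n) : (finRotate n).SameCycle x y := by
  rcases subsingleton_or_nontrivial (Fin n) with _ | _
  · exact (Subsingleton.elim x y).sameCycle _
  · have two_le : 2 ≤ n := Fin.nontrivial_iff_two_le.mp ‹_›
    have moves (z : Fin n) : finRotate n z ≠ z :=
      mem_support.mp (support_finRotate_of_le two_le ▸ Finset.mem_univ z)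
    exact (isCycle_finRotate_of_le two_le).sameCycle (moves x) (moves y)

theorem forall_forall_exists_rel_and_eq_or_iff {X : Type*} {r : X → X → Prop} {P : X → Prop}
    (euclidean : ∀ {x y z}, r x y → r x z → r y z) :
    (∀ p x, ∃ y, r x y ∧ (y = p ∨ P y)) ↔ (∀ x y, r x y) ∨ ∀ x, ∃ y, r x y ∧ P y := by
  constructor
  · intro h
    refine or_iff_not_imp_right.mpr fun hP ↦ ?_
    obtain ⟨x, hx⟩ := not_forall.mp hP
    have rel_x (p : X) : r x p := by
      obtain ⟨y, hxy, rfl | hy⟩ := h p x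
      · exact hxy
      · exact absurd ⟨y, hxy, hy⟩ hx
    exact fun y z ↦ euclidean (rel_x y) (rel_x z)
  · rintro (h | h) p x
    · exact ⟨p, h x p, .inl rfl⟩
    · obtain ⟨y, hxy, hy⟩ := h x
      exact ⟨y, hxy, .inr hy⟩

section RelRegularAt

variable {X : Type*} {σ : Perm X}

/-- Regularity of `α` at the distinguished point `p`, with an arbitrary permutation `σ` of an
arbitrary type in the role of `ζ`; `RegularAt` is the case `σ = finRotate n`. -/
def RelRegularAt (σ α : Perm X) (p : X) : Prop :=
  ∀ x, ∃ y, (σ * α).SameCycle x y ∧ (y = p ∨ α y = y)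

theorem relRegularAt_conj (g α : Perm X) (p : X) :
    RelRegularAt (g * σ * g⁻¹) (g * α * g⁻¹) (g p) ↔ RelRegularAt σ α p := by
  have conj_mul_conj : g * σ * g⁻¹ * (g * α * g⁻¹) = g * (σ * α) * g⁻¹ := by group
  simp_rw [RelRegularAt, conj_mul_conj]
  refine (g.forall_congr fun x ↦ g.exists_congr fun y ↦ ?_).symm
  simp

theorem relRegularAt_conj_of_commute {g : Perm X} (hg : Commute g σ) (α : Perm X) (p : X) :
    RelRegularAt σ (g * α * g⁻¹) p ↔ RelRegularAt σ α (g⁻¹ p) := by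
  have conj_eq : g * σ * g⁻¹ = σ := hg.mul_inv_cancel
  simpa [conj_eq] using relRegularAt_conj (σ := σ) g α (g⁻¹ p)

theorem forall_relRegularAt_zpow_conj_iff (hσ : ∀ x y, σ.SameCycle x y) (α : Perm X) (p : X) :
    (∀ l : ℤ, RelRegularAt σ (σ ^ l * α * σ ^ (-l)) p) ↔ ∀ q, RelRegularAt σ α q := by
  have regular_rotation (l : ℤ) :
      RelRegularAt σ (σ ^ l * α * σ ^ (-l)) p ↔ RelRegularAt σ α ((σ ^ (-l)) p) := by
    rw [zpow_neg]
    exact relRegularAt_conj_of_commute (Commute.zpow_self σ l) α p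
  have surjective_orbit : Function.Surjective fun l : ℤ ↦ (σ ^ (-l)) p := fun q ↦ by
    obtain ⟨k, hk⟩ := hσ p q
    exact ⟨-k, by simpa using hk⟩
  exact (forall_congr' regular_rotation).trans surjective_orbit.forall.symm

theorem stmt_6_general (hσ : ∀ x y, σ.SameCycle x y) (α : Perm X) (p : X) :
    (∀ l : ℤ, RelRegularAt σ (σ ^ l * α * σ ^ (-l)) p) ↔
      (∀ x y, (σ * α).SameCycle x y) ∨ ∀ x, ∃ y, (σ * α).SameCycle x y ∧ α y = y :=
  (forall_relRegularAt_zpow_conj_iff hσ α p).trans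
    (forall_forall_exists_rel_and_eq_or_iff fun hxy hxz ↦ hxy.symm.trans hxz)

end RelRegularAt

/-- Let `α ∈ S_n` be a quasi-diagram (involution of `Fin n`, 0-indexed:
point `1` is `⟨0, _⟩`; `ζ = finRotate n`).  Then `α` is rotatably regular (every rotation
`ζ^l α ζ^(-l)`, `l ∈ ℤ`, is regular) iff either `α` is maximal (`ζα` has exactly one orbit)
or every orbit of `ζα` contains at least one isolated point of `α`. -/
theorem stmt_6 (n : ℕ) (hn : 0 < n) (α : Equiv.Perm (Fin n))
    (hα : ∀ i, α (α i) = i) :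
    (∀ l : ℤ, RegularAt (finRotate n ^ l * α * finRotate n ^ (-l)) ⟨0, hn⟩) ↔
      ((∀ x y : Fin n, (finRotate n * α).SameCycle x y) ∨
        (∀ x : Fin n, ∃ y : Fin n, (finRotate n * α).SameCycle x y ∧ α y = y)) :=
  stmt_6_general sameCycle_finRotate α ⟨0, hn⟩
end

section
/- Let α ∈ S_n be a quasi-diagram, let i ∈ {1,…,n+1}, and let ι_i(α) ∈ S_{n+1} be the i-expansion of α. (1) If i = n+1, then the orbits of ζ_{n+1}·ι_{n+1}(α) on {1,…,n+1} are exactly the orbits O of ζ_n·α with 1 ∉ O, together with O₀ ∪ {n+1}, where O₀ is the orbit of ζ_n·α containing 1. (2) If i ≤ n, then the orbits of ζ_{n+1}·ι_i(α) on {1,…,n+1} are exactly the sets ϑ_{i,n+1}(O) for the orbits O of ζ_n·α with i ∉ O, together with ϑ_{i,n+1}(O₀) ∪ {i}, where O₀ is the orbit of ζ_n·α containing i. In particular, ι_i(α) has the same number of faces as α. -/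
/-- The cycle `ϑ_{i,n+1} = (i, i+1, …, n+1)` of `S_{n+1}`; 0-indexed on `Fin (n+1)` it is the
cycle `(a, a+1, …, Fin.last n)` where `a` corresponds to `i`. -/
def vartheta {n : ℕ} (a : Fin (n + 1)) : Equiv.Perm (Fin (n + 1)) :=
  Fin.revPerm * (Fin.cycleRange a.rev)⁻¹ * Fin.revPerm

/-- A permutation of `Fin n` regarded as a permutation of `Fin (n+1)` fixing the last point. -/
def castPerm {n : ℕ} (α : Equiv.Perm (Fin n)) : Equiv.Perm (Fin (n + 1)) :=
  α.viaFintypeEmbedding Fin.castSuccEmb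

/-- The `i`-expansion `ι_i(α) = ϑ_{i,n+1} α ϑ_{i,n+1}⁻¹` of a quasi-diagram `α ∈ S_n`. -/
def expand {n : ℕ} (a : Fin (n + 1)) (α : Equiv.Perm (Fin n)) : Equiv.Perm (Fin (n + 1)) :=
  vartheta a * castPerm α * (vartheta a)⁻¹

/-- `ω` is an orbit of the permutation `σ`. -/
def IsOrbit {m : ℕ} (σ : Equiv.Perm (Fin m)) (ω : Set (Fin m)) : Prop :=
  ∃ x : Fin m, ω = {y | σ.SameCycle x y}

/-!
Let `ρ = a.succAbove` be the increasing injection of `Fin n` into `Fin (n + 1)` that misses `a`.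
The cycle `ϑ` moves the added fixed point to `a`, so `ι_a` is the homomorphism extending
permutations along `ρ`. If `ζ_{n+1} a = ρ c`, then `ζ_{n+1} = (a, ρ c) ∘ ι_a(ζ_n)`, whence
`ζ_{n+1} ι_a(α) = (a, ρ c) ∘ ι_a(ζ_n α)`. Multiplying `ι_a(ζ_n α)` by this transposition inserts
`a` into the cycle of `ρ c`, just before `ρ c`. Hence the orbits of `ζ_{n+1} ι_a(α)` are the
preimages of those of `ζ_n α` under the map sending `a` to `c` and `ρ x` to `x`.
-/

open Equiv Equiv.Perm

section SameCycle

variable {A B : Type*} {σ : Perm A} {τ : Perm B}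

theorem sameCycle_map {f : A → B} (hf : ∀ x, τ.SameCycle (f x) (f (σ x))) {x y : A}
    (h : σ.SameCycle x y) : τ.SameCycle (f x) (f y) := by
  obtain ⟨k, rfl⟩ := h
  induction k with
  | zero => rfl
  | succ k ih =>
    rw [add_comm, zpow_one_add, mul_apply]
    exact ih.trans (hf _)
  | pred k ih =>
    refine ih.trans (SameCycle.symm ?_)
    simpa only [← mul_apply, ← zpow_one_add, add_sub_cancel] using hf ((σ ^ (-(k : ℤ) - 1)) x)

theorem sameCycle_iff_of_sameCycle_map {f : A → B} {g : B → A}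
    (hf : ∀ x, τ.SameCycle (f x) (f (σ x))) (hg : ∀ z, σ.SameCycle (g z) (g (τ z)))
    (hfg : ∀ z, τ.SameCycle z (f (g z))) (z w : B) :
    τ.SameCycle z w ↔ σ.SameCycle (g z) (g w) :=
  ⟨sameCycle_map hg, fun h => (hfg z).trans ((sameCycle_map hf h).trans (hfg w).symm)⟩

end SameCycle

section Orbit

variable {m n : ℕ} {σ : Perm (Fin n)} {τ : Perm (Fin m)} {g : Fin m → Fin n}

theorem IsOrbit.eq_setOf_sameCycle {O : Set (Fin n)} (hO : IsOrbit σ O) {c : Fin n} (hc : c ∈ O) :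
    O = {y | σ.SameCycle c y} := by
  obtain ⟨x, rfl⟩ := hO
  exact Set.ext fun y => ⟨hc.symm.trans, hc.trans⟩

theorem isOrbit_iff_exists_preimage_eq (hg : g.Surjective)
    (h : ∀ z w, τ.SameCycle z w ↔ σ.SameCycle (g z) (g w)) (ω : Set (Fin m)) :
    IsOrbit τ ω ↔ ∃ O, IsOrbit σ O ∧ g ⁻¹' O = ω := by
  constructor
  · rintro ⟨z, rfl⟩
    exact ⟨_, ⟨g z, rfl⟩, Set.ext fun w => (h z w).symm⟩
  · rintro ⟨_, ⟨x, rfl⟩, rfl⟩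
    obtain ⟨z, rfl⟩ := hg x
    exact ⟨z, Set.ext fun w => (h z w).symm⟩

theorem ncard_setOf_isOrbit_eq (hg : g.Surjective)
    (h : ∀ z w, τ.SameCycle z w ↔ σ.SameCycle (g z) (g w)) :
    {ω | IsOrbit τ ω}.ncard = {O | IsOrbit σ O}.ncard := by
  have image_eq : {ω | IsOrbit τ ω} = Set.preimage g '' {O | IsOrbit σ O} :=
    Set.ext (isOrbit_iff_exists_preimage_eq hg h)
  rw [image_eq, Set.ncard_image_of_injective _ hg.preimage_injective]

end Orbit

section Expand

variable {n : ℕ} (a : Fin (n + 1))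

theorem vartheta_castSucc (x : Fin n) : vartheta a x.castSucc = a.succAbove x := by
  have h : (a.rev.cycleRange)⁻¹ x.rev.succ = a.rev.succAbove x.rev :=
    Fin.cycleRange_symm_succ a.rev x.rev
  simp only [vartheta, mul_apply, Fin.revPerm_apply, Fin.rev_castSucc, h, Fin.rev_succAbove,
    Fin.rev_rev]

theorem vartheta_last : vartheta a (Fin.last n) = a := by
  have h : (a.rev.cycleRange)⁻¹ 0 = a.rev := Fin.cycleRange_symm_zero a.rev
  simp only [vartheta, mul_apply, Fin.revPerm_apply, Fin.rev_last, h, Fin.rev_rev]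

theorem vartheta_image_castSucc_image (O : Set (Fin n)) :
    vartheta a '' (Fin.castSucc '' O) = a.succAbove '' O := by
  simp only [Set.image_image, vartheta_castSucc]

theorem castPerm_castSucc (α : Perm (Fin n)) (x : Fin n) :
    castPerm α x.castSucc = (α x).castSucc :=
  α.viaFintypeEmbedding_apply_image Fin.castSuccEmb x

theorem castPerm_last (α : Perm (Fin n)) : castPerm α (Fin.last n) = Fin.last n :=
  α.viaFintypeEmbedding_apply_notMem_range Fin.castSuccEmb
    fun ⟨x, hx⟩ => Fin.castSucc_ne_last x hx

theorem expand_succAbove (α : Perm (Fin n)) (x : Fin n) :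
    expand a α (a.succAbove x) = a.succAbove (α x) := by
  have h : (vartheta a)⁻¹ (a.succAbove x) = x.castSucc :=
    inv_eq_iff_eq.2 (vartheta_castSucc a x).symm
  simp only [expand, mul_apply, h, castPerm_castSucc, vartheta_castSucc]

theorem expand_self (α : Perm (Fin n)) : expand a α a = a := by
  have h : (vartheta a)⁻¹ a = Fin.last n := inv_eq_iff_eq.2 (vartheta_last a).symm
  simp only [expand, mul_apply, h, castPerm_last, vartheta_last]

theorem expand_mul (α β : Perm (Fin n)) : expand a (α * β) = expand a α * expand a β := by
  ext x : 1
  cases x using a.succAboveCases with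
  | x => simp only [mul_apply, expand_self]
  | p x => simp only [mul_apply, expand_succAbove]

end Expand

section Rotation

variable {n : ℕ}

theorem val_finRotate (x : Fin n) :
    (finRotate n x : ℕ) = if (x : ℕ) + 1 = n then 0 else (x : ℕ) + 1 := by
  cases n with
  | zero => exact x.elim0
  | succ n => simp only [coe_finRotate, Fin.ext_iff, Fin.val_last, Nat.add_right_cancel_iff]

theorem val_succAbove (a : Fin (n + 1)) (x : Fin n) :
    (a.succAbove x : ℕ) = if (x : ℕ) < a then (x : ℕ) else (x : ℕ) + 1 := by
  simp only [Fin.succAbove, Fin.lt_def, Fin.val_castSucc, apply_ite Fin.val, Fin.val_succ]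

theorem finRotate_last_eq_succAbove (hn : 0 < n) :
    finRotate (n + 1) (Fin.last n) = (Fin.last n).succAbove ⟨0, hn⟩ := by
  rw [finRotate_last, Fin.succAbove_last]
  rfl

theorem finRotate_eq_succAbove_of_lt {a : Fin (n + 1)} (ha : (a : ℕ) < n) :
    finRotate (n + 1) a = a.succAbove ⟨a, ha⟩ := by
  rw [Fin.ext_iff, val_finRotate, val_succAbove, if_neg (by omega), if_neg (lt_irrefl _)]

theorem exists_finRotate_eq_succAbove (hn : 0 < n) (a : Fin (n + 1)) :
    ∃ c, finRotate (n + 1) a = a.succAbove c := by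
  rcases a.eq_castSucc_or_eq_last with ⟨x, rfl⟩ | rfl
  · exact ⟨_, finRotate_eq_succAbove_of_lt x.isLt⟩
  · exact ⟨_, finRotate_last_eq_succAbove hn⟩

theorem finRotate_succ_eq_swap_mul_expand {a : Fin (n + 1)} {c : Fin n}
    (hc : finRotate (n + 1) a = a.succAbove c) :
    finRotate (n + 1) = swap a (a.succAbove c) * expand a (finRotate n) := by
  ext x : 1
  cases x using a.succAboveCases with
  | x => rw [mul_apply, expand_self, swap_apply_left, hc]
  | p x =>
    rw [Fin.ext_iff, val_finRotate, val_succAbove] at hc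
    rw [mul_apply, expand_succAbove, swap_apply_def, if_neg (a.succAbove_ne _)]
    simp only [a.succAbove_right_inj, Fin.ext_iff, apply_ite Fin.val, val_finRotate, val_succAbove]
    split_ifs at hc ⊢ <;> omega

theorem finRotate_mul_expand {a : Fin (n + 1)} {c : Fin n}
    (hc : finRotate (n + 1) a = a.succAbove c) (α : Perm (Fin n)) :
    finRotate (n + 1) * expand a α = swap a (a.succAbove c) * expand a (finRotate n * α) := by
  rw [expand_mul, ← mul_assoc, ← finRotate_succ_eq_swap_mul_expand hc]

end Rotation

section Insertion

variable {n : ℕ} (σ : Perm (Fin n)) (a : Fin (n + 1)) (c : Fin n)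

/-- The left inverse of `a.succAbove` that sends the missing point `a` to `c`; it undoes, on orbits,
the insertion of `a` into the cycle of `c`. -/
def collapse : Fin (n + 1) → Fin n :=
  a.insertNth c id

theorem collapse_self : collapse a c a = c :=
  Fin.insertNth_apply_same (α := fun _ => Fin n) a c id

theorem collapse_succAbove (x : Fin n) : collapse a c (a.succAbove x) = x :=
  Fin.insertNth_apply_succAbove (α := fun _ => Fin n) a c id x

theorem collapse_surjective : (collapse a c).Surjective :=
  Function.RightInverse.surjective (collapse_succAbove a c)

variable {a c} in
theorem collapse_preimage_of_notMem {O : Set (Fin n)} (hc : c ∉ O) :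
    collapse a c ⁻¹' O = a.succAbove '' O := by
  ext z
  cases z using a.succAboveCases with
  | x => simp [collapse_self, hc]
  | p x => simp [collapse_succAbove]

variable {a c} in
theorem collapse_preimage_of_mem {O : Set (Fin n)} (hc : c ∈ O) :
    collapse a c ⁻¹' O = a.succAbove '' O ∪ {a} := by
  ext z
  cases z using a.succAboveCases with
  | x => simp [collapse_self, hc]
  | p x => simp [collapse_succAbove]

theorem swap_mul_expand_self : (swap a (a.succAbove c) * expand a σ) a = a.succAbove c := by
  rw [mul_apply, expand_self, swap_apply_left]

theorem swap_mul_expand_succAbove (x : Fin n) :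
    (swap a (a.succAbove c) * expand a σ) (a.succAbove x) =
      if σ x = c then a else a.succAbove (σ x) := by
  simp only [mul_apply, expand_succAbove, swap_apply_def, if_neg (a.succAbove_ne _),
    a.succAbove_right_inj]

theorem sameCycle_swap_mul_expand_iff (z w : Fin (n + 1)) :
    (swap a (a.succAbove c) * expand a σ).SameCycle z w ↔
      σ.SameCycle (collapse a c z) (collapse a c w) := by
  set τ := swap a (a.succAbove c) * expand a σ
  have τ_self : τ a = a.succAbove c := swap_mul_expand_self σ a c
  have τ_succAbove := swap_mul_expand_succAbove σ a c
  have step (x : Fin n) : σ.SameCycle x (σ x) := sameCycle_apply_right.2 .rfl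
  have τ_step (z : Fin (n + 1)) : τ.SameCycle z (τ z) := sameCycle_apply_right.2 .rfl
  refine sameCycle_iff_of_sameCycle_map (f := a.succAbove) (fun x => ?_) (fun z => ?_)
    (fun z => ?_) z w
  · by_cases hx : σ x = c
    · have τ_x : τ (a.succAbove x) = a := (τ_succAbove x).trans (if_pos hx)
      simpa only [τ_x, τ_self, hx] using (τ_step (a.succAbove x)).trans (τ_step _)
    · have τ_x : τ (a.succAbove x) = a.succAbove (σ x) := (τ_succAbove x).trans (if_neg hx)
      simpa only [τ_x] using τ_step (a.succAbove x)
  · cases z using a.succAboveCases with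
    | x => rw [τ_self, collapse_self, collapse_succAbove]
    | p x =>
      have collapse_τ : collapse a c (τ (a.succAbove x)) = σ x := by
        rw [τ_succAbove]
        split_ifs with hx
        · rw [collapse_self, hx]
        · exact collapse_succAbove a c _
      rw [collapse_τ, collapse_succAbove]
      exact step x
  · cases z using a.succAboveCases with
    | x => simpa only [collapse_self, τ_self] using τ_step a
    | p x => rw [collapse_succAbove]

theorem isOrbit_swap_mul_expand_iff (ω : Set (Fin (n + 1))) :
    IsOrbit (swap a (a.succAbove c) * expand a σ) ω ↔
      (∃ O, IsOrbit σ O ∧ c ∉ O ∧ ω = a.succAbove '' O) ∨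
        ω = a.succAbove '' {y | σ.SameCycle c y} ∪ {a} := by
  rw [isOrbit_iff_exists_preimage_eq (collapse_surjective a c)
    (sameCycle_swap_mul_expand_iff σ a c)]
  constructor
  · rintro ⟨O, hO, rfl⟩
    by_cases hc : c ∈ O
    · right
      rw [collapse_preimage_of_mem hc, ← hO.eq_setOf_sameCycle hc]
    · exact .inl ⟨O, hO, hc, collapse_preimage_of_notMem hc⟩
  · rintro (⟨O, hO, hc, rfl⟩ | rfl)
    · exact ⟨O, hO, collapse_preimage_of_notMem hc⟩
    · exact ⟨_, ⟨c, rfl⟩, collapse_preimage_of_mem SameCycle.rfl⟩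

theorem ncard_setOf_isOrbit_swap_mul_expand :
    {ω | IsOrbit (swap a (a.succAbove c) * expand a σ) ω}.ncard = {O | IsOrbit σ O}.ncard :=
  ncard_setOf_isOrbit_eq (collapse_surjective a c) (sameCycle_swap_mul_expand_iff σ a c)

end Insertion

theorem stmt_8_general (n : ℕ) (hn : 0 < n) (α : Equiv.Perm (Fin n)) (a : Fin (n + 1)) :
    (a = Fin.last n →
      ∀ ω : Set (Fin (n + 1)),
        IsOrbit (finRotate (n + 1) * expand a α) ω ↔
          ((∃ O : Set (Fin n), IsOrbit (finRotate n * α) O ∧ (⟨0, hn⟩ : Fin n) ∉ O ∧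
              ω = Fin.castSucc '' O) ∨
            ω = Fin.castSucc '' {y | (finRotate n * α).SameCycle ⟨0, hn⟩ y} ∪
              {Fin.last n})) ∧
    (∀ h : (a : ℕ) < n,
      ∀ ω : Set (Fin (n + 1)),
        IsOrbit (finRotate (n + 1) * expand a α) ω ↔
          ((∃ O : Set (Fin n), IsOrbit (finRotate n * α) O ∧ (⟨(a : ℕ), h⟩ : Fin n) ∉ O ∧
              ω = vartheta a '' (Fin.castSucc '' O)) ∨
            ω = vartheta a '' (Fin.castSucc ''
                {y | (finRotate n * α).SameCycle ⟨(a : ℕ), h⟩ y}) ∪ {a})) ∧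
    {ω : Set (Fin (n + 1)) | IsOrbit (finRotate (n + 1) * expand a α) ω}.ncard =
      {O : Set (Fin n) | IsOrbit (finRotate n * α) O}.ncard := by
  refine ⟨?_, fun h ω => ?_, ?_⟩
  · rintro rfl ω
    rw [finRotate_mul_expand (finRotate_last_eq_succAbove hn), isOrbit_swap_mul_expand_iff,
      Fin.succAbove_last]
  · simp only [vartheta_image_castSucc_image]
    rw [finRotate_mul_expand (finRotate_eq_succAbove_of_lt h), isOrbit_swap_mul_expand_iff]
  · obtain ⟨c, hc⟩ := exists_finRotate_eq_succAbove hn a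
    rw [finRotate_mul_expand hc, ncard_setOf_isOrbit_swap_mul_expand]

/-- Let `α ∈ S_n` be a quasi-diagram (an involution of `Fin n`, 0-indexed:
point `1` is `⟨0, _⟩`, point `n+1` of `S_{n+1}` is `Fin.last n`), and let `a : Fin (n+1)`
correspond to `i ∈ {1,…,n+1}`.
(1) If `i = n+1` the orbits of `ζ_{n+1} ι_i(α)` are exactly the orbits `O` of `ζ_n α` with
`1 ∉ O`, together with `O₀ ∪ {n+1}` where `O₀` is the orbit of `1`.
(2) If `i ≤ n` they are exactly the sets `ϑ_{i,n+1}(O)` for orbits `O` with `i ∉ O`,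
together with `ϑ_{i,n+1}(O₀) ∪ {i}` where `O₀` is the orbit of `i`.
In particular `ι_i(α)` has the same number of faces as `α`. -/
theorem stmt_8 (n : ℕ) (hn : 0 < n) (α : Equiv.Perm (Fin n))
    (hα : ∀ x, α (α x) = x) (a : Fin (n + 1)) :
    (a = Fin.last n →
      ∀ ω : Set (Fin (n + 1)),
        IsOrbit (finRotate (n + 1) * expand a α) ω ↔
          ((∃ O : Set (Fin n), IsOrbit (finRotate n * α) O ∧ (⟨0, hn⟩ : Fin n) ∉ O ∧
              ω = Fin.castSucc '' O) ∨
            ω = Fin.castSucc '' {y | (finRotate n * α).SameCycle ⟨0, hn⟩ y} ∪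
              {Fin.last n})) ∧
    (∀ h : (a : ℕ) < n,
      ∀ ω : Set (Fin (n + 1)),
        IsOrbit (finRotate (n + 1) * expand a α) ω ↔
          ((∃ O : Set (Fin n), IsOrbit (finRotate n * α) O ∧ (⟨(a : ℕ), h⟩ : Fin n) ∉ O ∧
              ω = vartheta a '' (Fin.castSucc '' O)) ∨
            ω = vartheta a '' (Fin.castSucc ''
                {y | (finRotate n * α).SameCycle ⟨(a : ℕ), h⟩ y}) ∪ {a})) ∧
    {ω : Set (Fin (n + 1)) | IsOrbit (finRotate (n + 1) * expand a α) ω}.ncard =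
      {O : Set (Fin n) | IsOrbit (finRotate n * α) O}.ncard :=
  stmt_8_general n hn α a
end

section
/- Let m ≥ 1 and let α ∈ S_{2m} be a fixed-point-free involution such that ζ_{2m}·α has exactly one orbit on {1,…,2m} (i.e. α is a maximal chord diagram). Then m is even. -/
/-!
Any two permutations with a single orbit on the same finite set have the same sign, so if `ζ` and
`ζ * α` both have one, then `α` is even. An involution with `k` chords is a product of `k` disjoint
transpositions, hence has sign `(-1) ^ k`, and so `k` is even.
-/

section

open Equiv Equiv.Perm Finset

theorem isCycleOn_univ_of_forall_sameCycle {X : Type*} {σ : Perm X}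
    (hσ : ∀ x y, σ.SameCycle x y) : σ.IsCycleOn Set.univ :=
  ⟨Set.bijOn_univ.2 σ.bijective, fun x _ y _ => hσ x y⟩

theorem isCycleOn_univ_finRotate (n : ℕ) : (finRotate n).IsCycleOn Set.univ := by
  rcases lt_or_ge n 2 with hn | hn
  · have : Subsingleton (Fin n) := Fin.subsingleton_iff_le_one.2 (Nat.le_of_lt_succ hn)
    exact isCycleOn_of_subsingleton _ _
  · have moved : {i | finRotate n i ≠ i} = Set.univ := by
      rw [← coe_support_eq_set_support, support_finRotate_of_le hn, coe_univ]
    exact moved ▸ (isCycle_finRotate_of_le hn).isCycleOn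

section Finite

variable {X : Type*} [Fintype X] [DecidableEq X]

theorem support_eq_univ_iff_forall_apply_ne {σ : Perm X} :
    σ.support = univ ↔ ∀ x, σ x ≠ x := by
  simp only [eq_univ_iff_forall, mem_support]

theorem sign_of_isCycleOn_univ {σ : Perm X} (hσ : σ.IsCycleOn Set.univ) :
    sign σ = (-1) ^ (Fintype.card X - 1) := by
  rcases subsingleton_or_nontrivial X with hX | hX
  · rw [Subsingleton.elim σ 1, Perm.sign_one,
      Nat.sub_eq_zero_of_le (Fintype.card_le_one_iff_subsingleton.2 hX), pow_zero]
  · have apply_ne (x : X) : σ x ≠ x := hσ.apply_ne Set.nontrivial_univ (Set.mem_univ x)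
    have isCycle : σ.IsCycle :=
      isCycle_iff_exists_isCycleOn.2 ⟨_, Set.nontrivial_univ, hσ, fun x _ => Set.mem_univ x⟩
    obtain ⟨k, hk⟩ := Nat.exists_eq_succ_of_ne_zero (Fintype.card_ne_zero (α := X))
    rw [isCycle.sign, support_eq_univ_iff_forall_apply_ne.2 apply_ne, card_univ, hk,
      Nat.succ_sub_one, pow_succ, mul_neg_one, neg_neg]

theorem sign_eq_one_of_isCycleOn_univ_mul {ζ α : Perm X} (hζ : ζ.IsCycleOn Set.univ)
    (hmul : (ζ * α).IsCycleOn Set.univ) : sign α = 1 := by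
  have sign_mul_eq : sign ζ * sign α = sign ζ := by
    rw [← Perm.sign_mul, sign_of_isCycleOn_univ hmul, sign_of_isCycleOn_univ hζ]
  exact mul_eq_left.1 sign_mul_eq

theorem sign_eq_one_iff_four_dvd_card_support {α : Perm X} (hα : α ^ 2 = 1) :
    sign α = 1 ↔ 4 ∣ #α.support := by
  obtain ⟨k, hk⟩ := two_dvd_card_support hα
  have card_sub_fixedPoints :
      Fintype.card X - Fintype.card (Function.fixedPoints α) = #α.support := by
    rw [card_fixedPoints, sum_cycleType, Nat.sub_sub_self (card_le_univ _)]
  rw [sign_of_pow_two_eq_one hα, card_sub_fixedPoints, hk, Nat.mul_div_cancel_left k two_pos,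
    neg_one_pow_eq_one_iff_even (by decide), even_iff_two_dvd]
  exact (Nat.mul_dvd_mul_iff_left two_pos).symm

theorem stmt_17_general {ζ α : Perm X} (hζ : ζ.IsCycleOn Set.univ) (hα : ∀ x, α (α x) = x)
    (hmax : (ζ * α).IsCycleOn Set.univ) : 4 ∣ #α.support :=
  (sign_eq_one_iff_four_dvd_card_support (Perm.ext hα)).1
    (sign_eq_one_of_isCycleOn_univ_mul hζ hmax)

end Finite

end

/-- Let `m ≥ 1` and let `α ∈ S_{2m}` be a fixed-point-free involution of
`Fin (2m)` such that `ζ_{2m} α` (`ζ = finRotate (2m)`) has exactly one orbit, i.e. `α` is a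
maximal chord diagram.  Then `m` is even. -/
theorem stmt_17 (m : ℕ) (hm : 0 < m) (α : Equiv.Perm (Fin (2 * m)))
    (hα : ∀ i, α (α i) = i) (hfree : ∀ i, α i ≠ i)
    (hmax : ∀ x y : Fin (2 * m), (finRotate (2 * m) * α).SameCycle x y) :
    Even m := by
  have four_dvd := stmt_17_general (isCycleOn_univ_finRotate (2 * m)) hα
    (isCycleOn_univ_of_forall_sameCycle hmax)
  rw [support_eq_univ_iff_forall_apply_ne.2 hfree, Finset.card_univ, Fintype.card_fin] at four_dvd
  exact even_iff_two_dvd.2 (Nat.dvd_of_mul_dvd_mul_left two_pos four_dvd)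
end

section
/- For every positive integer g, the number of maximal chord diagrams in S_{4g}, i.e. the number of fixed-point-free involutions α ∈ S_{4g} such that ζ_{4g}·α has exactly one orbit on {1,…,4g}, equals (4g)! / (4^g · (2g+1)!). -/
open Nat

/-!
For a permutation `π` of `N` points let `s_π(I)` be the sign of `π` on `I` if `I` is a union of
orbits of `π`, and `0` otherwise. Taking symmetric difference with an orbit that misses a given
point shows that `∑ I, (N - |I|) (-1)^|I| s_π(I)` equals `N` if `π` is a full cycle and `0`
otherwise.

Apply this to `π = α σ` for a fixed chord diagram `α` on `N = 2n` points and sum over all full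
cycles `σ` first. If `α` preserves `I`, then `s_π(I) = 0` unless `I` is empty or everything, since
`σ` does not preserve `I`. If `α` maps two points outside `I` into `I`, conjugating `σ` by their
transposition reverses the sign of `s_π(I)`, so the sum vanishes. As the weight of the whole set is
`0`, only `I = ∅` and the sets formed by the endpoints of some chords and one further point
contribute. This gives the number of full cycles `σ` with `α σ` full as an alternating sum of
products of factorials, which telescopes to `(2n - 1)! / (n + 1)` for even `n`. Counting the pairs
`(σ, α)` with `σ α` full in two ways then moves from a fixed diagram `α` to a
fixed full cycle `ζ`.
-/

namespace MaximalChordDiagram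

open Equiv Equiv.Perm MulAction Finset
open scoped Pointwise

section Invariant

variable {X : Type*} [DecidableEq X] {π ρ : Perm X} {I J : Finset X} {a b x y : X}

theorem mem_iff_mem_of_sameCycle (hI : π ∈ stabilizer (Perm X) I) (h : π.SameCycle x y) :
    x ∈ I ↔ y ∈ I := by
  obtain ⟨i, rfl⟩ := h
  exact (mem_stabilizer_finset.1 (zpow_mem hI i) x).symm

theorem mem_stabilizer_sdiff (hI : π ∈ stabilizer (Perm X) I) (hJ : π ∈ stabilizer (Perm X) J) :
    π ∈ stabilizer (Perm X) (I \ J) := by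
  simp_all only [mem_stabilizer_finset, mem_sdiff, implies_true]

theorem mem_stabilizer_inter (hI : π ∈ stabilizer (Perm X) I) (hJ : π ∈ stabilizer (Perm X) J) :
    π ∈ stabilizer (Perm X) (I ∩ J) := by
  simp_all only [mem_stabilizer_finset, mem_inter, implies_true]

theorem mem_stabilizer_symmDiff_iff (hJ : π ∈ stabilizer (Perm X) J) :
    π ∈ stabilizer (Perm X) (symmDiff I J) ↔ π ∈ stabilizer (Perm X) I := by
  simp only [mem_stabilizer_finset, mem_symmDiff, Perm.smul_def] at hJ ⊢
  exact forall_congr' fun x => by rw [hJ x]; tauto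

theorem swap_mem_stabilizer_finset : swap a b ∈ stabilizer (Perm X) I ↔ (a ∈ I ↔ b ∈ I) := by
  rw [← stabilizer_coe_finset, Equiv.swap_mem_stabilizer, mem_coe, mem_coe]

theorem mem_stabilizer_of_isCycleOn (h : π.IsCycleOn I) : π ∈ stabilizer (Perm X) I :=
  mem_stabilizer_finset.2 fun _ => h.apply_mem_iff

theorem isCycleOn_of_mem_stabilizer (hI : π ∈ stabilizer (Perm X) I)
    (h : ∀ x ∈ I, π.SameCycle x a) : π.IsCycleOn I :=
  ⟨π.bijOn fun x => mem_stabilizer_finset.1 hI x, fun x hx y hy => (h x hx).trans (h y hy).symm⟩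

theorem filter_sameCycle_mem_stabilizer [Fintype X] (π : Perm X) (x : X) :
    π ∈ stabilizer (Perm X) ({y | π.SameCycle x y} : Finset X) :=
  mem_stabilizer_finset.2 fun y => by
    simp only [mem_filter_univ, Perm.smul_def, sameCycle_apply_right]

theorem mem_stabilizer_compl [Fintype X] (hI : π ∈ stabilizer (Perm X) I) :
    π ∈ stabilizer (Perm X) Iᶜ := by
  simp_all only [mem_stabilizer_finset, mem_compl, implies_true]

-- If `b ∉ J`, then `I ∩ J` is closed under `ρ` but misses the `ρ`-preimage of `a`.
theorem mem_of_swap_mul_mem_stabilizer (hI : ρ ∈ stabilizer (Perm X) I) (ha : a ∈ I) (hb : b ∉ I)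
    (hJ : swap a b * ρ ∈ stabilizer (Perm X) J) (haJ : a ∈ J) : b ∈ J := by
  by_contra hbJ
  have apply_ne : ∀ x ∈ J, ρ x ≠ a := by
    rintro x hx rfl
    have := (mem_stabilizer_finset.1 hJ x).2 hx
    simp only [Perm.smul_def, Perm.mul_apply, swap_apply_left] at this
    exact hbJ this
  have hIJ : ρ ∈ stabilizer (Perm X) (I ∩ J) := by
    refine mem_stabilizer_finset'.2 fun x hx => ?_
    obtain ⟨hxI, hxJ⟩ := mem_inter.1 hx
    have hρx : ρ x ∈ I := (mem_stabilizer_finset.1 hI x).2 hxI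
    have hσx := (mem_stabilizer_finset.1 hJ x).2 hxJ
    rw [Perm.smul_def, Perm.mul_apply,
      swap_apply_of_ne_of_ne (apply_ne x hxJ) (ne_of_mem_of_not_mem hρx hb)] at hσx
    exact mem_inter.2 ⟨hρx, hσx⟩
  have ha' : ρ⁻¹ a ∈ I ∩ J :=
    (mem_stabilizer_finset.1 (inv_mem hIJ) a).2 (mem_inter.2 ⟨ha, haJ⟩)
  exact apply_ne _ (mem_inter.1 ha').2 (by simp)

end Invariant

section FullCycles

variable {X : Type*} [Fintype X] [DecidableEq X] {π ρ : Perm X} {I : Finset X} {a b : X}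

variable (X) in
/-- The full cycles of `X`: the permutations with at most one orbit, so that the identity of a
subsingleton is included. A diagram `α` is maximal when `ζ * α` is a full cycle. -/
def fullCycles : Finset (Perm X) := {π | ∀ x y, π.SameCycle x y}

theorem mem_fullCycles : π ∈ fullCycles X ↔ ∀ x y, π.SameCycle x y := by
  simp only [fullCycles, mem_filter_univ]

theorem mem_fullCycles_iff_eq_empty_or_eq_univ :
    π ∈ fullCycles X ↔ ∀ I : Finset X, π ∈ stabilizer (Perm X) I → I = ∅ ∨ I = univ := by
  rw [mem_fullCycles]
  refine ⟨fun h I hI => ?_, fun h x y => ?_⟩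
  · refine I.eq_empty_or_nonempty.imp_right fun ⟨x, hx⟩ => ?_
    exact eq_univ_of_forall fun y => (mem_iff_mem_of_sameCycle hI (h x y)).1 hx
  · have horbit := h _ (filter_sameCycle_mem_stabilizer π x)
    have hx : x ∈ ({y | π.SameCycle x y} : Finset X) := by
      simpa only [mem_filter_univ] using SameCycle.refl π x
    have := horbit.resolve_left (ne_empty_of_mem hx) ▸ mem_univ y
    simpa only [mem_filter_univ] using this

theorem mem_fullCycles_iff_cycleType (hX : 2 ≤ Fintype.card X) :
    π ∈ fullCycles X ↔ π.cycleType = {Fintype.card X} := by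
  have : Nontrivial X := Fintype.one_lt_card_iff_nontrivial.1 hX
  rw [mem_fullCycles]
  constructor
  · intro h
    have hne : ∀ x, π x ≠ x := fun x hx => by
      obtain ⟨y, hy⟩ := exists_ne x
      exact hy ((h x y).eq_of_left hx).symm
    have hcycle : π.IsCycle :=
      let ⟨x⟩ := (inferInstance : Nonempty X); ⟨x, hne x, fun y _ => h x y⟩
    have hsupp : π.support = univ := by ext x; simp [hne x]
    rw [hcycle.cycleType, hsupp, Finset.card_univ]
  · intro h
    have hcycle : π.IsCycle := card_cycleType_eq_one.1 (by rw [h, Multiset.card_singleton])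
    have hsupp : π.support = univ := by
      rw [← card_eq_iff_eq_univ, ← sum_cycleType, h, Multiset.sum_singleton]
    have hne : ∀ x, π x ≠ x := fun x => mem_support.1 (hsupp ▸ mem_univ x)
    exact fun x y => hcycle.sameCycle (hne x) (hne y)

theorem card_fullCycles [Nonempty X] : #(fullCycles X) = (Fintype.card X - 1)! := by
  rcases Nat.lt_or_ge (Fintype.card X) 2 with hX | hX
  · have : Subsingleton X := Fintype.card_le_one_iff_subsingleton.1 (by omega)
    have huniv : fullCycles X = univ :=
      eq_univ_of_forall fun π => mem_fullCycles.2 fun x y => by rw [Subsingleton.elim x y]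
    rw [huniv, Finset.card_univ, Fintype.card_perm, factorial_eq_one.2 (by omega),
      factorial_eq_one.2 (by omega)]
  · have h := card_of_cycleType_singleton (α := X) hX le_rfl
    rw [Nat.choose_self, mul_one] at h
    rw [← h]
    congr 1
    ext π
    rw [mem_fullCycles_iff_cycleType hX, mem_filter_univ]

theorem permCongr_mem_fullCycles {Y : Type*} [Fintype Y] [DecidableEq Y] (e : X ≃ Y) :
    e.permCongr π ∈ fullCycles Y ↔ π ∈ fullCycles X := by
  have key (i : ℤ) : e.permCongr π ^ i = e.permCongr (π ^ i) := (map_zpow e.permCongrHom π i).symm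
  simp only [mem_fullCycles, e.forall_congr_left, SameCycle, key, permCongr_apply,
    ← e.eq_symm_apply]

theorem conj_mem_fullCycles (c : Perm X) : c * π * c⁻¹ ∈ fullCycles X ↔ π ∈ fullCycles X := by
  rw [← permCongr_eq_mul, permCongr_mem_fullCycles]

theorem mul_comm_mem_fullCycles : π * ρ ∈ fullCycles X ↔ ρ * π ∈ fullCycles X := by
  rw [← conj_mem_fullCycles ρ]
  group

theorem sameCycle_or_sameCycle_of_swap_mul_mem_fullCycles (h : swap a b * ρ ∈ fullCycles X)
    (x : X) : ρ.SameCycle x a ∨ ρ.SameCycle x b := by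
  by_contra! hx
  have hswap : swap a b ∈ stabilizer (Perm X) ({y | ρ.SameCycle x y} : Finset X) :=
    swap_mem_stabilizer_finset.2 (by simp only [mem_filter_univ, hx])
  rcases mem_fullCycles_iff_eq_empty_or_eq_univ.1 h _
    (mul_mem hswap (filter_sameCycle_mem_stabilizer ρ x)) with h | h
  · exact filter_eq_empty_iff.1 h (mem_univ x) (SameCycle.refl ρ x)
  · exact hx.1 (filter_eq_self.1 h a (mem_univ a))

theorem swap_mul_mem_fullCycles_iff (hI : ρ ∈ stabilizer (Perm X) I) (ha : a ∈ I) (hb : b ∉ I) :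
    swap a b * ρ ∈ fullCycles X ↔ ρ.IsCycleOn I ∧ ρ.IsCycleOn (Iᶜ : Finset X) := by
  have not_sameCycle {x y : X} (hx : x ∈ I) (hy : y ∉ I) : ¬ ρ.SameCycle x y := fun h =>
    hy ((mem_iff_mem_of_sameCycle hI h).1 hx)
  constructor
  · intro hfull
    have sameCycle_or := sameCycle_or_sameCycle_of_swap_mul_mem_fullCycles hfull
    refine ⟨isCycleOn_of_mem_stabilizer hI (a := a) fun x hx => ?_,
      isCycleOn_of_mem_stabilizer (mem_stabilizer_compl hI) (a := b) fun x hx => ?_⟩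
    · exact (sameCycle_or x).resolve_right (not_sameCycle hx hb)
    · exact (sameCycle_or x).resolve_left fun h => not_sameCycle ha (mem_compl.1 hx) h.symm
  · rintro ⟨hcycle, hcycle'⟩
    refine mem_fullCycles_iff_eq_empty_or_eq_univ.2 fun J hJ => ?_
    have haJ : a ∈ J ↔ b ∈ J :=
      ⟨mem_of_swap_mul_mem_stabilizer hI ha hb hJ,
        mem_of_swap_mul_mem_stabilizer (mem_stabilizer_compl hI) (mem_compl.2 hb)
          (notMem_compl.2 ha) (swap_comm a b ▸ hJ)⟩
    have hρJ : ρ ∈ stabilizer (Perm X) J :=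
      ((stabilizer (Perm X) J).mul_mem_cancel_left (swap_mem_stabilizer_finset.2 haJ)).1 hJ
    have mem_iff (x : X) : x ∈ J ↔ a ∈ J := by
      by_cases hx : x ∈ I
      · exact mem_iff_mem_of_sameCycle hρJ (hcycle.2 hx ha)
      · rw [haJ]
        exact mem_iff_mem_of_sameCycle hρJ
          (hcycle'.2 (mem_coe.2 (mem_compl.2 hx)) (mem_coe.2 (mem_compl.2 hb)))
    by_cases h : a ∈ J
    · exact .inr (eq_univ_of_forall fun x => (mem_iff x).2 h)
    · exact .inl (eq_empty_of_forall_notMem fun x hx => h ((mem_iff x).1 hx))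

end FullCycles

section Split

theorem subtypePerm_subtypeCongr {X : Type*} {π : Perm X} {p : X → Prop} [DecidablePred p]
    (h : ∀ x, p (π x) ↔ p x) :
    (π.subtypePerm h).subtypeCongr (π.subtypePerm fun x => not_congr (h x)) = π := by
  ext x
  by_cases hx : p x
  · rw [Perm.subtypeCongr.left_apply _ _ hx, subtypePerm_apply]
  · rw [Perm.subtypeCongr.right_apply _ _ hx, subtypePerm_apply]

theorem subtypeCongr_mem_stabilizer {X : Type*} [DecidableEq X] {I : Finset X}
    (ρ₁ : Perm {x // x ∈ I}) (ρ₂ : Perm {x // x ∉ I}) :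
    ρ₁.subtypeCongr ρ₂ ∈ stabilizer (Perm X) I :=
  mem_stabilizer_finset'.2 fun x hx => by
    rw [Perm.smul_def, Perm.subtypeCongr.left_apply _ _ hx]
    exact (ρ₁ ⟨x, hx⟩).2

variable {X : Type*} [DecidableEq X] {π : Perm X} {I : Finset X} {a b : X}

theorem subtypePerm_mem_fullCycles {p : X → Prop} [Fintype {x // p x}]
    (h : ∀ x, p (π x) ↔ p x) :
    π.subtypePerm h ∈ fullCycles {x // p x} ↔ π.IsCycleOn {x | p x} := by
  simp only [mem_fullCycles, sameCycle_subtypePerm, Subtype.forall]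
  exact ⟨fun hπ => ⟨π.bijOn h, fun x hx y hy => hπ x hx y hy⟩, fun hπ x hx y hy => hπ.2 hx hy⟩

variable [Fintype X]

theorem swap_mul_subtypeCongr_mem_fullCycles (ha : a ∈ I) (hb : b ∉ I)
    {ρ₁ : Perm {x // x ∈ I}} {ρ₂ : Perm {x // x ∉ I}} :
    swap a b * ρ₁.subtypeCongr ρ₂ ∈ fullCycles X ↔
      ρ₁ ∈ fullCycles {x // x ∈ I} ∧ ρ₂ ∈ fullCycles {x // x ∉ I} := by
  have hI := subtypeCongr_mem_stabilizer ρ₁ ρ₂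
  have hmem (x : X) : ρ₁.subtypeCongr ρ₂ x ∈ I ↔ x ∈ I := mem_stabilizer_finset.1 hI x
  have hρ₁ : (ρ₁.subtypeCongr ρ₂).subtypePerm hmem = ρ₁ :=
    Perm.ext fun x => Subtype.ext (Perm.subtypeCongr.left_apply ρ₁ ρ₂ x.2)
  have hρ₂ : (ρ₁.subtypeCongr ρ₂).subtypePerm (fun x => not_congr (hmem x)) = ρ₂ :=
    Perm.ext fun x => Subtype.ext (Perm.subtypeCongr.right_apply ρ₁ ρ₂ x.2)
  have h₁ := subtypePerm_mem_fullCycles hmem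
  have h₂ := subtypePerm_mem_fullCycles (p := (· ∉ I)) fun x => not_congr (hmem x)
  rw [hρ₁] at h₁
  rw [hρ₂] at h₂
  rw [swap_mul_mem_fullCycles_iff hI ha hb, h₁, h₂, coe_compl]
  rfl

theorem card_filter_swap_mul_mem_stabilizer (ha : a ∈ I) (hb : b ∉ I) :
    #{σ ∈ fullCycles X | swap a b * σ ∈ stabilizer (Perm X) I} =
      (#I - 1)! * (Fintype.card X - #I - 1)! := by
  have : Nonempty {x // x ∈ I} := ⟨a, ha⟩
  have : Nonempty {x // x ∉ I} := ⟨b, hb⟩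
  have hcard : #(fullCycles {x // x ∈ I} ×ˢ fullCycles {x // x ∉ I}) =
      (#I - 1)! * (Fintype.card X - #I - 1)! := by
    rw [card_product, card_fullCycles, card_fullCycles, Fintype.card_subtype_compl,
      Fintype.card_coe]
  rw [← hcard, eq_comm]
  refine card_nbij (fun ρ => swap a b * ρ.1.subtypeCongr ρ.2) (fun ρ hρ => ?_) ?_ fun σ hσ => ?_
  · rw [mem_coe, mem_filter, swap_mul_self_mul, swap_mul_subtypeCongr_mem_fullCycles ha hb]
    exact ⟨mem_product.1 hρ, subtypeCongr_mem_stabilizer _ _⟩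
  · exact ((mul_right_injective _).comp (subtypeCongrHom_injective (· ∈ I))).injOn
  · obtain ⟨hσ, hI⟩ := mem_filter.1 hσ
    have hρ := subtypePerm_subtypeCongr (mem_stabilizer_finset.1 hI)
    rw [← swap_mul_self_mul a b σ, ← hρ, swap_mul_subtypeCongr_mem_fullCycles ha hb] at hσ
    exact ⟨(_, _), mem_coe.2 (mem_product.2 hσ),
      (congrArg (swap a b * ·) hρ).trans (swap_mul_self_mul a b σ)⟩

end Split

section SignOn

variable {X : Type*} [DecidableEq X] {π ρ : Perm X} {I C : Finset X}

/-- The sign of the restriction of `π` to `I` if `π` stabilizes `I`, and `0` otherwise: the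
principal minor indexed by `I` of the permutation matrix of `π`. -/
def signOn (π : Perm X) (I : Finset X) : ℤ :=
  if h : π ∈ stabilizer (Perm X) I then sign (π.subtypePerm (mem_stabilizer_finset.1 h)) else 0

theorem signOn_of_mem (h : π ∈ stabilizer (Perm X) I) :
    signOn π I = sign (π.subtypePerm (mem_stabilizer_finset.1 h)) :=
  dif_pos h

theorem signOn_of_notMem (h : π ∉ stabilizer (Perm X) I) : signOn π I = 0 :=
  dif_neg h

theorem signOn_mul_of_mem_left (hπ : π ∈ stabilizer (Perm X) I) :
    signOn (π * ρ) I = signOn π I * signOn ρ I := by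
  by_cases hρ : ρ ∈ stabilizer (Perm X) I
  · rw [signOn_of_mem hπ, signOn_of_mem hρ, signOn_of_mem (mul_mem hπ hρ), ← Units.val_mul,
      ← Perm.sign_mul]
    rfl
  · rw [signOn_of_notMem hρ, mul_zero, signOn_of_notMem]
    rwa [(stabilizer (Perm X) I).mul_mem_cancel_left hπ]

theorem signOn_mul_of_mem_right (hρ : ρ ∈ stabilizer (Perm X) I) :
    signOn (π * ρ) I = signOn π I * signOn ρ I := by
  by_cases hπ : π ∈ stabilizer (Perm X) I
  · exact signOn_mul_of_mem_left hπ
  · rw [signOn_of_notMem hπ, zero_mul, signOn_of_notMem]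
    rwa [(stabilizer (Perm X) I).mul_mem_cancel_right hρ]

theorem signOn_eq_sign [Fintype X] {τ : Perm X} (h : ∀ x ∈ I, τ x = π x)
    (h' : ∀ x ∉ I, τ x = x) : signOn π I = sign τ := by
  have hτ : τ ∈ stabilizer (Perm X) I := compl_compl I ▸ mem_stabilizer_compl
    (mem_stabilizer_finset'.2 fun x hx => by rwa [Perm.smul_def, h' x (mem_compl.1 hx)])
  have hπ : π ∈ stabilizer (Perm X) I := mem_stabilizer_finset'.2 fun x hx => by
    rw [Perm.smul_def, ← h x hx]
    exact (mem_stabilizer_finset.1 hτ x).2 hx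
  have heq : π.subtypePerm (mem_stabilizer_finset.1 hπ) =
      τ.subtypePerm (mem_stabilizer_finset.1 hτ) :=
    Perm.ext fun x => Subtype.ext (h x x.2).symm
  rw [signOn_of_mem hπ, heq]
  congr 1
  convert sign_subtypePerm τ (mem_stabilizer_finset.1 hτ) fun x => not_imp_comm.1 (h' x)

theorem signOn_eq_one (h : ∀ x ∈ I, π x = x) : signOn π I = 1 := by
  have hπ : π ∈ stabilizer (Perm X) I :=
    mem_stabilizer_finset'.2 fun x hx => by rwa [Perm.smul_def, h x hx]
  have hone : π.subtypePerm (mem_stabilizer_finset.1 hπ) = 1 :=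
    Perm.ext fun x => Subtype.ext (h x x.2)
  rw [signOn_of_mem hπ, hone, Perm.sign_one, Units.val_one]

theorem exists_signOn_eq_sign [Fintype X] (hI : π ∈ stabilizer (Perm X) I) :
    ∃ τ : Perm X, (∀ x ∈ I, τ x = π x) ∧ (∀ x ∉ I, τ x = x) ∧ signOn π I = sign τ :=
  have h : ∀ x ∈ I, ofSubtype (π.subtypePerm (mem_stabilizer_finset.1 hI)) x = π x :=
    fun _ hx => ofSubtype_apply_of_mem _ hx
  have h' : ∀ x ∉ I, ofSubtype (π.subtypePerm (mem_stabilizer_finset.1 hI)) x = x :=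
    fun _ hx => ofSubtype_apply_of_not_mem _ hx
  ⟨_, h, h', signOn_eq_sign h h'⟩

theorem signOn_union [Finite X] (hI : π ∈ stabilizer (Perm X) I)
    (hC : π ∈ stabilizer (Perm X) C) (hdisj : Disjoint I C) :
    signOn π (I ∪ C) = signOn π I * signOn π C := by
  have := Fintype.ofFinite X
  obtain ⟨r, hr, hr', hrI⟩ := exists_signOn_eq_sign hI
  obtain ⟨s, hs, hs', hsC⟩ := exists_signOn_eq_sign hC
  rw [hrI, hsC, ← Units.val_mul, ← Perm.sign_mul]
  refine signOn_eq_sign (fun x hx => ?_) fun x hx => ?_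
  · rw [Perm.mul_apply]
    rcases mem_union.1 hx with hx | hx
    · rw [hs' x (disjoint_left.1 hdisj hx), hr x hx]
    · have hπx : π x ∈ C := (mem_stabilizer_finset.1 hC x).2 hx
      rw [hs x hx, hr' _ (disjoint_right.1 hdisj hπx)]
  · rw [mem_union, not_or] at hx
    rw [Perm.mul_apply, hs' x hx.2, hr' x hx.1]

theorem signOn_mul_self (hI : π ∈ stabilizer (Perm X) I) : signOn π I * signOn π I = 1 := by
  rw [signOn_of_mem hI, ← Units.val_mul, Int.units_mul_self, Units.val_one]

theorem signOn_symmDiff [Finite X] (hC : π ∈ stabilizer (Perm X) C) :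
    signOn π (symmDiff I C) = signOn π I * signOn π C := by
  by_cases hI : π ∈ stabilizer (Perm X) I
  · have hIC := mem_stabilizer_inter hI hC
    calc signOn π (symmDiff I C)
        = signOn π (I \ C) * signOn π (C \ I) :=
          signOn_union (mem_stabilizer_sdiff hI hC) (mem_stabilizer_sdiff hC hI)
            disjoint_sdiff_sdiff
      _ = signOn π (I \ C) * signOn π (I ∩ C) * (signOn π (C \ I) * signOn π (I ∩ C)) := by
          linear_combination (-signOn π (I \ C) * signOn π (C \ I)) * signOn_mul_self hIC
      _ = signOn π I * signOn π C := by
          rw [← signOn_union (mem_stabilizer_sdiff hI hC) hIC (disjoint_sdiff_inter I C),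
            ← signOn_union (mem_stabilizer_sdiff hC hI) hIC
              (inter_comm C I ▸ disjoint_sdiff_inter C I),
            sdiff_union_inter, inter_comm I C, sdiff_union_inter]
  · rw [signOn_of_notMem hI, zero_mul, signOn_of_notMem]
    rwa [mem_stabilizer_symmDiff_iff hC]

theorem sign_of_mem_fullCycles [Fintype X] [Nonempty X] (h : π ∈ fullCycles X) :
    (sign π : ℤ) = -(-1) ^ Fintype.card X := by
  rcases Nat.lt_or_ge (Fintype.card X) 2 with hX | hX
  · have : Subsingleton X := Fintype.card_le_one_iff_subsingleton.1 (by omega)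
    have hcard : Fintype.card X = 1 := by have := Fintype.card_pos (α := X); omega
    rw [Subsingleton.elim π 1, hcard, Perm.sign_one, Units.val_one, pow_one, neg_neg]
  · rw [sign_of_cycleType, (mem_fullCycles_iff_cycleType hX).1 h, Multiset.sum_singleton,
      Multiset.card_singleton, pow_succ, mul_neg_one]
    push_cast
    rfl

theorem signOn_of_isCycleOn (hI : I.Nonempty) (h : π.IsCycleOn I) : signOn π I = -(-1) ^ #I := by
  obtain ⟨x, hx⟩ := hI
  have : Nonempty {x // x ∈ I} := ⟨x, hx⟩
  have hmem := mem_stabilizer_of_isCycleOn h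
  have hfull := (subtypePerm_mem_fullCycles (mem_stabilizer_finset.1 hmem)).2 h
  rw [signOn_of_mem hmem, sign_of_mem_fullCycles hfull, Fintype.card_coe]

theorem signOn_swap {a b : X} [Finite X] (hab : a ≠ b) (ha : a ∈ I) (hb : b ∈ I) :
    signOn (swap a b) I = -1 := by
  have := Fintype.ofFinite X
  have hfix : ∀ x ∉ I, swap a b x = x := fun x hx =>
    swap_apply_of_ne_of_ne (ne_of_mem_of_not_mem ha hx).symm (ne_of_mem_of_not_mem hb hx).symm
  rw [signOn_eq_sign (fun _ _ => rfl) hfix, sign_swap hab, Units.val_neg, Units.val_one]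

end SignOn

section Detection

theorem neg_one_pow_card_symmDiff {X : Type*} [DecidableEq X] (I C : Finset X) :
    (-1 : ℤ) ^ #(symmDiff I C) = (-1) ^ #I * (-1) ^ #C := by
  have hcard : #(symmDiff I C) = #(I \ C) + #(C \ I) :=
    card_union_of_disjoint disjoint_sdiff_sdiff
  rw [hcard, ← card_sdiff_add_card_inter I C, ← card_sdiff_add_card_inter C I, inter_comm C I]
  have hsq : (-1 : ℤ) ^ #(I ∩ C) * (-1) ^ #(I ∩ C) = 1 := pow_mul_pow_eq_one _ (by norm_num)
  linear_combination (-(-1) ^ #(I \ C) * (-1) ^ #(C \ I)) * hsq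

variable {X : Type*} [DecidableEq X] {π : Perm X} {I C : Finset X}

theorem neg_one_pow_card_mul_signOn_symmDiff [Finite X] (hC : C.Nonempty)
    (hπC : π.IsCycleOn C) :
    (-1) ^ #(symmDiff I C) * signOn π (symmDiff I C) = -((-1) ^ #I * signOn π I) := by
  rw [neg_one_pow_card_symmDiff, signOn_symmDiff (mem_stabilizer_of_isCycleOn hπC),
    signOn_of_isCycleOn hC hπC]
  have hsq : (-1 : ℤ) ^ #C * (-1) ^ #C = 1 := pow_mul_pow_eq_one _ (by norm_num)
  linear_combination (-(-1) ^ #I * signOn π I) * hsq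

variable [Fintype X]

theorem sum_filter_notMem_neg_one_pow_mul_signOn (π : Perm X) (x : X) :
    ∑ I : Finset X with x ∉ I, (-1) ^ #I * signOn π I = if π ∈ fullCycles X then 1 else 0 := by
  split_ifs with hπ
  · rw [sum_eq_single ∅]
    · rw [card_empty, pow_zero, one_mul, signOn_eq_one fun x hx => absurd hx (notMem_empty x)]
    · intro I hI hne
      rw [signOn_of_notMem, mul_zero]
      intro hstab
      rcases mem_fullCycles_iff_eq_empty_or_eq_univ.1 hπ I hstab with h | h
      · exact hne h
      · exact (mem_filter_univ I).1 hI (h ▸ mem_univ x)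
    · exact fun h => (h (mem_filter.2 ⟨mem_univ ∅, notMem_empty x⟩)).elim
  · obtain ⟨y, hy⟩ : ∃ y, ¬ π.SameCycle y x := by
      by_contra! h
      exact hπ (mem_fullCycles.2 fun y z => (h y).trans (h z).symm)
    set C : Finset X := {z | π.SameCycle y z}
    have hyC : y ∈ C := (mem_filter_univ y).2 (SameCycle.refl π y)
    have hxC : x ∉ C := fun h => hy ((mem_filter_univ x).1 h)
    have hcycle : π.IsCycleOn C := isCycleOn_of_mem_stabilizer (a := y)
      (filter_sameCycle_mem_stabilizer π y) fun z hz => ((mem_filter_univ z).1 hz).symm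
    refine sum_involution (fun I _ => symmDiff I C) (fun I _ => ?_) (fun I _ _ h => ?_)
      (fun I hI => ?_) fun I _ => symmDiff_symmDiff_cancel_right C I
    · rw [neg_one_pow_card_mul_signOn_symmDiff ⟨y, hyC⟩ hcycle, add_neg_cancel]
    · rw [symmDiff_eq_left] at h
      exact ne_empty_of_mem hyC h
    · rw [mem_filter_univ] at hI ⊢
      simp only [mem_symmDiff, hI, hxC, false_and, or_self, not_false_eq_true]

theorem sum_card_sub_card_mul_signOn (π : Perm X) :
    ∑ I : Finset X, ((Fintype.card X : ℤ) - #I) * ((-1) ^ #I * signOn π I) =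
      if π ∈ fullCycles X then (Fintype.card X : ℤ) else 0 := by
  calc ∑ I : Finset X, ((Fintype.card X : ℤ) - #I) * ((-1) ^ #I * signOn π I)
      = ∑ I : Finset X, ∑ x with x ∉ I, (-1) ^ #I * signOn π I := by
        refine sum_congr rfl fun I _ => ?_
        rw [sum_const, nsmul_eq_mul, filter_not, filter_mem_eq_inter, univ_inter,
          ← compl_eq_univ_sdiff, card_compl, Nat.cast_sub (card_le_univ I)]
    _ = ∑ x : X, ∑ I : Finset X with x ∉ I, (-1) ^ #I * signOn π I := by
        simp only [sum_filter]
        exact sum_comm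
    _ = if π ∈ fullCycles X then (Fintype.card X : ℤ) else 0 := by
        simp only [sum_filter_notMem_neg_one_pow_mul_signOn, sum_const, nsmul_eq_mul, mul_ite,
          mul_one, mul_zero, Finset.card_univ]

end Detection

section SumOverFullCycles

variable {X : Type*} [Fintype X] [DecidableEq X] {α : Perm X} {I : Finset X} {a b c : X}

theorem sum_fullCycles_signOn_empty [Nonempty X] (α : Perm X) :
    ∑ σ ∈ fullCycles X, signOn (α * σ) ∅ = (Fintype.card X - 1)! := by
  simp only [signOn_eq_one fun x hx => absurd hx (notMem_empty x), sum_const, card_fullCycles,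
    nsmul_eq_mul, mul_one]

theorem sum_fullCycles_signOn_of_mem (hα : α ∈ stabilizer (Perm X) I) (hempty : I ≠ ∅)
    (huniv : I ≠ univ) : ∑ σ ∈ fullCycles X, signOn (α * σ) I = 0 :=
  sum_eq_zero fun σ hσ => by
    rw [signOn_mul_of_mem_left hα, signOn_of_notMem (π := σ), mul_zero]
    exact fun h => (mem_fullCycles_iff_eq_empty_or_eq_univ.1 hσ I h).elim hempty huniv

-- Conjugating `σ` by `swap b c` changes `α * σ` on `I` by the transposition of `α b` and `α c`.
theorem sum_fullCycles_signOn_of_leaving_pair (hbc : b ≠ c) (hb : b ∉ I) (hc : c ∉ I)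
    (hαb : α b ∈ I) (hαc : α c ∈ I) : ∑ σ ∈ fullCycles X, signOn (α * σ) I = 0 := by
  have hfix : ∀ x ∈ I, swap b c x = x := fun x hx =>
    swap_apply_of_ne_of_ne (ne_of_mem_of_not_mem hx hb) (ne_of_mem_of_not_mem hx hc)
  have hconj (σ : Perm X) :
      signOn (α * (swap b c * σ * (swap b c)⁻¹)) I = -signOn (α * σ) I := by
    have hswap : α * (swap b c * σ * (swap b c)⁻¹) =
        swap (α b) (α c) * (α * σ * swap b c) := by
      rw [swap_inv, Equiv.swap_apply_apply]
      group
    rw [hswap, signOn_mul_of_mem_left (swap_mem_stabilizer_finset.2 (iff_of_true hαb hαc)),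
      signOn_mul_of_mem_right (swap_mem_stabilizer_finset.2 (iff_of_false hb hc)),
      signOn_swap (α.injective.ne hbc) hαb hαc, signOn_eq_one hfix, mul_one, neg_one_mul]
  have hsum : ∑ σ ∈ fullCycles X, signOn (α * σ) I = -∑ σ ∈ fullCycles X, signOn (α * σ) I := by
    rw [← sum_neg_distrib, eq_comm]
    exact sum_equiv (MulAut.conj (swap b c)).toEquiv
      (fun σ => (conj_mem_fullCycles (swap b c)).symm) fun σ _ => (hconj σ).symm
  linarith

theorem sum_fullCycles_signOn_of_mul_swap_mem (ha : a ∈ I) (hb : b ∉ I)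
    (hα : α * swap a b ∈ stabilizer (Perm X) I) :
    ∑ σ ∈ fullCycles X, signOn (α * σ) I =
      -(-1) ^ #I * signOn (α * swap a b) I * ((#I - 1)! * (Fintype.card X - #I - 1)! : ℕ) := by
  have hterm (σ : Perm X) (hσ : σ ∈ fullCycles X) :
      signOn (α * σ) I = if swap a b * σ ∈ stabilizer (Perm X) I then
        -(-1) ^ #I * signOn (α * swap a b) I else 0 := by
    rw [← swap_mul_self_mul a b σ, ← mul_assoc, signOn_mul_of_mem_left hα, swap_mul_self_mul]
    split_ifs with h
    · rw [← swap_mul_self_mul a b σ, swap_mul_mem_fullCycles_iff h ha hb] at hσ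
      rw [signOn_of_isCycleOn ⟨a, ha⟩ hσ.1, mul_comm]
    · rw [signOn_of_notMem h, mul_zero]
  rw [sum_congr rfl hterm, ← sum_filter, sum_const, card_filter_swap_mul_mem_stabilizer ha hb,
    nsmul_eq_mul, mul_comm]

theorem card_mul_card_filter_mul_mem_fullCycles (α : Perm X) :
    (Fintype.card X : ℤ) * #{σ ∈ fullCycles X | α * σ ∈ fullCycles X} =
      ∑ I : Finset X, ((Fintype.card X : ℤ) - #I) *
        ((-1) ^ #I * ∑ σ ∈ fullCycles X, signOn (α * σ) I) := by
  simp only [mul_sum]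
  rw [sum_comm]
  simp only [sum_card_sub_card_mul_signOn, ← sum_filter, sum_const, nsmul_eq_mul]
  exact mul_comm _ _

end SumOverFullCycles

section StandardDiagram

variable {ι : Type*} {p q : ι × Bool} {K L : Finset ι} {I : Finset (ι × Bool)}

variable (ι) in
/-- The chord diagram on `ι × Bool` whose chords join `(i, false)` to `(i, true)`. -/
def standardDiagram : Perm (ι × Bool) :=
  prodCongrRight fun _ => boolNot

theorem standardDiagram_apply (p : ι × Bool) : standardDiagram ι p = (p.1, !p.2) := rfl

theorem standardDiagram_apply_ne (p : ι × Bool) : standardDiagram ι p ≠ p := fun h =>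
  Bool.not_ne_self p.2 (congrArg Prod.snd h)

theorem standardDiagram_standardDiagram (p : ι × Bool) :
    standardDiagram ι (standardDiagram ι p) = p := by
  rw [standardDiagram_apply, standardDiagram_apply, Bool.not_not]

theorem eq_or_eq_standardDiagram_of_fst_eq (h : q.1 = p.1) :
    q = p ∨ q = standardDiagram ι p := by
  rw [standardDiagram_apply, Prod.ext_iff, Prod.ext_iff]
  exact (Bool.eq_or_eq_not q.2 p.2).imp (⟨h, ·⟩) (⟨h, ·⟩)

variable [DecidableEq ι]

/-- The set of all endpoints of the chords in `K`, together with the point `p`. It is used when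
the chord of `p` is not in `K`. -/
def insertEndpoint (p : ι × Bool) (K : Finset ι) : Finset (ι × Bool) :=
  insert p (K ×ˢ univ)

theorem mem_insertEndpoint : q ∈ insertEndpoint p K ↔ q = p ∨ q.1 ∈ K := by
  simp only [insertEndpoint, mem_insert, mem_product, mem_univ, and_true]

theorem card_insertEndpoint (h : p.1 ∉ K) : #(insertEndpoint p K) = 2 * #K + 1 := by
  rw [insertEndpoint, card_insert_of_notMem fun hp => h (mem_product.1 hp).1, card_product,
    Finset.card_univ, Fintype.card_bool, mul_comm]

theorem standardDiagram_notMem_insertEndpoint (h : p.1 ∉ K) :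
    standardDiagram ι p ∉ insertEndpoint p K := fun hp =>
  (mem_insertEndpoint.1 hp).elim (standardDiagram_apply_ne p) h

theorem eq_and_eq_of_insertEndpoint_eq (hp : p.1 ∉ K) (hq : q.1 ∉ L)
    (h : insertEndpoint p K = insertEndpoint q L) : p = q ∧ K = L := by
  have hpq : q = p := by
    by_contra hne
    have hqK : q.1 ∈ K :=
      (mem_insertEndpoint.1 (h ▸ mem_insertEndpoint.2 (.inl rfl))).resolve_left hne
    exact standardDiagram_notMem_insertEndpoint hq (h ▸ mem_insertEndpoint.2 (.inr hqK))
  subst hpq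
  refine ⟨rfl, ext fun i => ?_⟩
  by_cases hi : i = q.1
  · exact iff_of_false (hi ▸ hp) (hi ▸ hq)
  · have hne : (i, true) ≠ q := fun h => hi (congrArg Prod.fst h)
    have hmem : (i, true) ∈ insertEndpoint q K ↔ (i, true) ∈ insertEndpoint q L := by rw [h]
    simpa only [mem_insertEndpoint, hne, false_or] using hmem

theorem exists_eq_insertEndpoint (hp : p ∈ I) (hp' : standardDiagram ι p ∉ I)
    (h : ∀ q ∈ I, standardDiagram ι q ∉ I → q = p) : ∃ K, p.1 ∉ K ∧ I = insertEndpoint p K := by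
  refine ⟨(I.erase p).image Prod.fst, fun hmem => ?_, ext fun q => ?_⟩
  · obtain ⟨q, hq, hqp⟩ := mem_image.1 hmem
    rcases eq_or_eq_standardDiagram_of_fst_eq hqp with rfl | rfl
    · exact notMem_erase q I hq
    · exact hp' (mem_of_mem_erase hq)
  · rw [mem_insertEndpoint, mem_image]
    constructor
    · exact fun hq => or_iff_not_imp_left.2 fun hqp => ⟨q, mem_erase.2 ⟨hqp, hq⟩, rfl⟩
    · rintro (rfl | ⟨r, hr, hrq⟩)
      · exact hp
      · obtain ⟨hrp, hrI⟩ := mem_erase.1 hr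
        rcases eq_or_eq_standardDiagram_of_fst_eq hrq.symm with rfl | rfl
        · exact hrI
        · by_contra hnot
          exact hrp (h r hrI hnot)

/-- The permutation exchanging the endpoints of every chord in `K` and fixing all other points. -/
def flipChords (K : Finset ι) : Perm (ι × Bool) :=
  prodCongrRight fun i => if i ∈ K then boolNot else 1

theorem flipChords_apply_of_mem (h : p.1 ∈ K) : flipChords K p = standardDiagram ι p := by
  change (p.1, (if p.1 ∈ K then boolNot else 1) p.2) = (p.1, !p.2)
  rw [if_pos h]
  rfl

theorem flipChords_apply_of_notMem (h : p.1 ∉ K) : flipChords K p = p := by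
  change (p.1, (if p.1 ∈ K then boolNot else 1) p.2) = p
  rw [if_neg h]
  rfl

theorem sign_flipChords [Fintype ι] : (sign (flipChords K) : ℤ) = (-1) ^ #K := by
  have hnot : sign boolNot = -1 := by decide
  simp only [flipChords, sign_prodCongrRight, apply_ite sign, Perm.sign_one, hnot]
  rw [prod_ite_mem, univ_inter, prod_const, Units.val_pow_eq_pow_val, Units.val_neg, Units.val_one]

theorem signOn_standardDiagram_mul_swap [Finite ι] (h : p.1 ∉ K) :
    signOn (standardDiagram ι * swap p (standardDiagram ι p)) (insertEndpoint p K) =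
      (-1) ^ #K := by
  have := Fintype.ofFinite ι
  rw [← sign_flipChords]
  refine signOn_eq_sign (fun q hq => ?_) fun q hq =>
    flipChords_apply_of_notMem fun hqK => hq (mem_insertEndpoint.2 (.inr hqK))
  rw [Perm.mul_apply]
  rcases mem_insertEndpoint.1 hq with rfl | hqK
  · rw [swap_apply_left, standardDiagram_standardDiagram, flipChords_apply_of_notMem h]
  · have hqp : q ≠ p := fun hqp => h (hqp ▸ hqK)
    have hqp' : q ≠ standardDiagram ι p := fun hqp => by rw [hqp] at hqK; exact h hqK
    rw [swap_apply_of_ne_of_ne hqp hqp', flipChords_apply_of_mem hqK]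

theorem standardDiagram_mul_swap_mem_stabilizer [Finite ι] (h : p.1 ∉ K) :
    standardDiagram ι * swap p (standardDiagram ι p) ∈
      stabilizer (Perm (ι × Bool)) (insertEndpoint p K) := by
  refine not_imp_comm.1 signOn_of_notMem ?_
  rw [signOn_standardDiagram_mul_swap h]
  exact pow_ne_zero _ (by norm_num)

variable [Fintype ι]

theorem sum_fullCycles_signOn_insertEndpoint (h : p.1 ∉ K) :
    ∑ σ ∈ fullCycles (ι × Bool), signOn (standardDiagram ι * σ) (insertEndpoint p K) =
      (-1) ^ #K * ((2 * #K)! * (2 * (Fintype.card ι - #K) - 2)! : ℕ) := by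
  rw [sum_fullCycles_signOn_of_mul_swap_mem (mem_insertEndpoint.2 (.inl rfl))
    (standardDiagram_notMem_insertEndpoint h) (standardDiagram_mul_swap_mem_stabilizer h),
    signOn_standardDiagram_mul_swap h, card_insertEndpoint h, Fintype.card_prod,
    Fintype.card_bool, pow_succ, pow_mul, neg_one_sq, one_pow, one_mul, neg_neg, one_mul,
    show Fintype.card ι * 2 - (2 * #K + 1) - 1 = 2 * (Fintype.card ι - #K) - 2 by omega]
  rfl

theorem sum_fullCycles_signOn_eq_zero (hempty : I ≠ ∅) (huniv : I ≠ univ)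
    (hI : ∀ p K, p.1 ∉ K → I ≠ insertEndpoint p K) :
    ∑ σ ∈ fullCycles (ι × Bool), signOn (standardDiagram ι * σ) I = 0 := by
  by_cases hstab : standardDiagram ι ∈ stabilizer (Perm (ι × Bool)) I
  · exact sum_fullCycles_signOn_of_mem hstab hempty huniv
  obtain ⟨p, hp, hp'⟩ : ∃ p ∈ I, standardDiagram ι p ∉ I := by
    by_contra! h
    exact hstab (mem_stabilizer_finset'.2 h)
  obtain ⟨q, hq, hq', hqp⟩ : ∃ q ∈ I, standardDiagram ι q ∉ I ∧ q ≠ p := by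
    by_contra! h
    obtain ⟨K, hK, rfl⟩ := exists_eq_insertEndpoint hp hp' h
    exact hI p K hK rfl
  refine sum_fullCycles_signOn_of_leaving_pair ((standardDiagram ι).injective.ne hqp) hq' hp' ?_ ?_
  · rwa [standardDiagram_standardDiagram]
  · rwa [standardDiagram_standardDiagram]

end StandardDiagram

section CountStandardDiagram

variable {ι : Type*} [Fintype ι] [DecidableEq ι]

theorem sum_eq_add_sum_insertEndpoint {M : Type*} [AddCommMonoid M] {F : Finset (ι × Bool) → M}
    (hF : ∀ I ≠ ∅, (∀ p K, p.1 ∉ K → I ≠ insertEndpoint p K) → F I = 0) :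
    ∑ I, F I = F ∅ + ∑ p, ∑ K ∈ ({p.1}ᶜ : Finset ι).powerset, F (insertEndpoint p K) := by
  set D := (univ : Finset (ι × Bool)).sigma fun p => ({p.1}ᶜ : Finset ι).powerset
  have hD (d) : d ∈ D ↔ d.1.1 ∉ d.2 := by
    simp only [D, mem_sigma, mem_univ, true_and, mem_powerset, Finset.subset_compl_singleton]
  have hsupport : ∑ I, F I = ∑ I ∈ insert ∅ (D.image fun d => insertEndpoint d.1 d.2), F I := by
    refine (sum_subset (subset_univ _) fun I _ hI => ?_).symm
    rw [mem_insert, not_or] at hI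
    exact hF I hI.1 fun p K hp h => hI.2 (mem_image.2 ⟨⟨p, K⟩, (hD _).2 hp, h.symm⟩)
  have hempty : ∅ ∉ D.image fun d => insertEndpoint d.1 d.2 := fun h => by
    obtain ⟨d, -, hd⟩ := mem_image.1 h
    exact insert_ne_empty _ _ hd
  rw [hsupport, sum_insert hempty, sum_image, sum_sigma]
  rintro ⟨p, K⟩ hp ⟨q, L⟩ hq h
  obtain ⟨rfl, rfl⟩ := eq_and_eq_of_insertEndpoint_eq ((hD _).1 hp) ((hD _).1 hq) h
  rfl

theorem sum_powerset_signOn_insertEndpoint {m : ℕ} (hι : Fintype.card ι = m + 1)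
    (p : ι × Bool) :
    ∑ K ∈ ({p.1}ᶜ : Finset ι).powerset, (2 * (m + 1) - (#(insertEndpoint p K) : ℤ)) *
        ((-1) ^ #(insertEndpoint p K) *
          ∑ σ ∈ fullCycles (ι × Bool), signOn (standardDiagram ι * σ) (insertEndpoint p K)) =
      -∑ j ∈ range (m + 1), (-1 : ℤ) ^ j * m.choose j * ((2 * j)! * (2 * m + 1 - 2 * j)! : ℕ) := by
  have hcard : #({p.1}ᶜ : Finset ι) = m := by
    rw [card_compl, hι, card_singleton, Nat.add_sub_cancel]
  have hterm : ∀ K ∈ ({p.1}ᶜ : Finset ι).powerset,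
      (2 * (m + 1) - (#(insertEndpoint p K) : ℤ)) * ((-1) ^ #(insertEndpoint p K) *
          ∑ σ ∈ fullCycles (ι × Bool), signOn (standardDiagram ι * σ) (insertEndpoint p K)) =
        -((-1) ^ #K * ((2 * #K)! * (2 * m + 1 - 2 * #K)! : ℕ)) := by
    intro K hK
    have hle : #K ≤ m := hcard ▸ card_le_card (mem_powerset.1 hK)
    have hp : p.1 ∉ K := Finset.subset_compl_singleton.1 (mem_powerset.1 hK)
    obtain ⟨k, rfl⟩ := Nat.exists_eq_add_of_le hle
    rw [sum_fullCycles_signOn_insertEndpoint hp, card_insertEndpoint hp, hι,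
      show 2 * (#K + k) + 1 - 2 * #K = 2 * k + 1 by omega,
      show 2 * (#K + k + 1 - #K) - 2 = 2 * k by omega, Nat.factorial_succ (2 * k)]
    push_cast
    rw [pow_succ, pow_mul, neg_one_sq, one_pow]
    ring
  rw [sum_congr rfl hterm, sum_neg_distrib,
    sum_powerset_apply_card fun j => (-1 : ℤ) ^ j * ((2 * j)! * (2 * m + 1 - 2 * j)! : ℕ), hcard]
  simp only [nsmul_eq_mul, mul_left_comm, mul_assoc]

theorem card_filter_standardDiagram_mul_mem_fullCycles {m : ℕ} (hι : Fintype.card ι = m + 1) :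
    (#{σ ∈ fullCycles (ι × Bool) | standardDiagram ι * σ ∈ fullCycles (ι × Bool)} : ℤ) =
      (2 * m + 1)! -
        ∑ j ∈ range (m + 1), (-1 : ℤ) ^ j * m.choose j * ((2 * j)! * (2 * m + 1 - 2 * j)! : ℕ) := by
  have : Nonempty ι := Fintype.card_pos_iff.1 (by omega)
  have hX : Fintype.card (ι × Bool) = 2 * (m + 1) := by
    rw [Fintype.card_prod, Fintype.card_bool, hι, mul_comm]
  have hXℤ : (Fintype.card (ι × Bool) : ℤ) = 2 * (m + 1) := by exact_mod_cast hX
  have hne : (2 * (m + 1) : ℤ) ≠ 0 := by omega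
  refine mul_left_cancel₀ hne ?_
  rw [← hXℤ, card_mul_card_filter_mul_mem_fullCycles, sum_eq_add_sum_insertEndpoint,
    sum_fullCycles_signOn_empty, hXℤ,
    sum_congr rfl fun p _ => sum_powerset_signOn_insertEndpoint hι p, sum_const,
    Finset.card_univ, nsmul_eq_mul, hXℤ, hX, card_empty]
  · push_cast
    rw [show 2 * (m + 1) - 1 = 2 * m + 1 by omega]
    ring
  · intro I hempty hI
    by_cases huniv : I = univ
    · rw [huniv, Finset.card_univ, sub_self, zero_mul]
    · rw [sum_fullCycles_signOn_eq_zero hempty huniv hI, mul_zero, mul_zero]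

end CountStandardDiagram

section AlternatingSum

theorem four_mul_choose_mul_factorial_mul_factorial (j k : ℕ) :
    4 * (j + k + 1) * (j + k + 2) * ((j + k).choose j * ((2 * j)! * (2 * k + 1)!)) =
      (j + k + 1).choose j * ((2 * j)! * (2 * k + 3)!) +
        (j + k + 1).choose (j + 1) * ((2 * j + 2)! * (2 * k + 1)!) := by
  have hchoose : (j + k).choose j * (j + k + 1) = (j + k + 1).choose j * (k + 1) := by
    rw [Nat.choose_mul_succ_eq, show j + k + 1 - j = k + 1 by omega]
  have hchoose_succ : (j + k + 1) * (j + k).choose j = (j + k + 1).choose (j + 1) * (j + 1) :=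
    Nat.add_one_mul_choose_eq (j + k) j
  rw [Nat.factorial_succ (2 * k + 2), Nat.factorial_succ (2 * k + 1),
    Nat.factorial_succ (2 * j + 1), Nat.factorial_succ (2 * j)]
  linear_combination (2 * (2 * j)! * (2 * k + 1)! * (2 * k + 3)) * hchoose +
    (2 * (2 * j)! * (2 * k + 1)! * (2 * j + 1)) * hchoose_succ

theorem sum_range_neg_one_pow_mul_choose_mul_factorial (m : ℕ) :
    4 * (m + 1) * (m + 2) * ∑ j ∈ range (m + 1),
        (-1 : ℤ) ^ j * m.choose j * ((2 * j)! * (2 * m + 1 - 2 * j)! : ℕ) =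
      (2 * m + 3)! + (-1) ^ m * (2 * m + 2)! := by
  set G : ℕ → ℤ := fun j => (-1) ^ j * (m + 1).choose j * ((2 * j)! * (2 * m + 3 - 2 * j)! : ℕ)
  have hG : ∀ j ∈ range (m + 1), 4 * (m + 1) * (m + 2) *
      ((-1 : ℤ) ^ j * m.choose j * ((2 * j)! * (2 * m + 1 - 2 * j)! : ℕ)) = G j - G (j + 1) := by
    intro j hj
    obtain ⟨k, rfl⟩ := Nat.exists_eq_add_of_le (Nat.lt_succ_iff.1 (mem_range.1 hj))
    have h := congrArg (Nat.cast (R := ℤ)) (four_mul_choose_mul_factorial_mul_factorial j k)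
    simp only [G]
    rw [show 2 * (j + k) + 1 - 2 * j = 2 * k + 1 by omega,
      show 2 * (j + k) + 3 - 2 * j = 2 * k + 3 by omega,
      show 2 * (j + k) + 3 - 2 * (j + 1) = 2 * k + 1 by omega,
      show 2 * (j + 1) = 2 * j + 2 by ring, pow_succ]
    push_cast at h ⊢
    linear_combination (-1) ^ j * h
  rw [mul_sum, sum_congr rfl hG, sum_range_sub']
  simp only [G]
  rw [show 2 * m + 3 - 2 * (m + 1) = 1 by omega, show 2 * (m + 1) = 2 * m + 2 by ring, pow_succ,
    Nat.choose_self, Nat.choose_zero_right, mul_zero, Nat.sub_zero, Nat.factorial_zero,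
    Nat.factorial_one]
  push_cast
  ring

end AlternatingSum

section ChordDiagrams

variable {X Y : Type*} [Fintype X] [DecidableEq X] [Fintype Y] [DecidableEq Y] {α σ ζ : Perm X}
  {n : ℕ}

variable (X) in
/-- The chord diagrams on `X`: the fixed-point-free involutions of `X`. -/
def chordDiagrams : Finset (Perm X) := {α | (∀ x, α (α x) = x) ∧ ∀ x, α x ≠ x}

theorem mem_chordDiagrams : α ∈ chordDiagrams X ↔ (∀ x, α (α x) = x) ∧ ∀ x, α x ≠ x := by
  rw [chordDiagrams, mem_filter_univ]

theorem permCongr_mem_chordDiagrams (e : X ≃ Y) :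
    e.permCongr α ∈ chordDiagrams Y ↔ α ∈ chordDiagrams X := by
  simp only [mem_chordDiagrams, ← e.forall_congr_right (q := fun y => _ = y),
    ← e.forall_congr_right (q := fun y => _ ≠ y), permCongr_apply, symm_apply_apply,
    apply_eq_iff_eq, ne_eq]

theorem mem_chordDiagrams_iff_cycleType (hX : Fintype.card X = 2 * n) :
    α ∈ chordDiagrams X ↔ α.cycleType = Multiset.replicate n 2 := by
  have hsq : (∀ x, α (α x) = x) ↔ ∀ c ∈ α.cycleType, c = 2 := by
    rw [← pow_prime_eq_one_iff, sq, Equiv.ext_iff]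
    rfl
  have hsupport : (∀ x, α x ≠ x) ↔ α.cycleType.sum = 2 * n := by
    rw [sum_cycleType, ← hX, card_eq_iff_eq_univ, eq_univ_iff_forall]
    simp only [mem_support]
  rw [mem_chordDiagrams, hsq, hsupport, Multiset.eq_replicate, and_comm]
  refine and_congr_left fun h => ?_
  rw [Multiset.eq_replicate_card.2 h, Multiset.sum_replicate, Multiset.card_replicate,
    smul_eq_mul]
  omega

theorem card_chordDiagrams_mul_factorial (hX : Fintype.card X = 2 * n) (hn : n ≠ 0) :
    #(chordDiagrams X) * (2 ^ n * n !) = (2 * n)! := by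
  have hcycleType : chordDiagrams X = ({α | α.cycleType = Multiset.replicate n 2} : Finset _) := by
    ext α
    rw [mem_chordDiagrams_iff_cycleType hX, mem_filter_univ]
  have hsum : (Multiset.replicate n 2).sum = Fintype.card X := by
    rw [Multiset.sum_replicate, hX, smul_eq_mul, mul_comm]
  have h := card_of_cycleType_mul_eq X (Multiset.replicate n 2)
  rwa [if_pos ⟨hsum.le, fun c hc => (Multiset.eq_of_mem_replicate hc).ge⟩, hsum, Nat.sub_self,
    Nat.factorial_zero, one_mul, Multiset.prod_replicate, Multiset.toFinset_replicate, if_neg hn,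
    prod_singleton, Multiset.count_replicate_self, ← hcycleType, hX] at h

theorem standardDiagram_mem_chordDiagrams {ι : Type*} [Fintype ι] [DecidableEq ι] :
    standardDiagram ι ∈ chordDiagrams (ι × Bool) :=
  mem_chordDiagrams.2 ⟨standardDiagram_standardDiagram, standardDiagram_apply_ne⟩

theorem exists_permCongr_eq_standardDiagram (hX : Fintype.card X = 2 * n)
    (hα : α ∈ chordDiagrams X) :
    ∃ e : X ≃ Fin n × Bool, e.permCongr α = standardDiagram (Fin n) := by
  have hcard : Fintype.card (Fin n × Bool) = 2 * n := by
    rw [Fintype.card_prod, Fintype.card_fin, Fintype.card_bool, mul_comm]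
  let e := Fintype.equivOfCardEq (hX.trans hcard.symm)
  have hconj : IsConj (e.permCongr α) (standardDiagram (Fin n)) := by
    rw [isConj_iff_cycleType_eq,
      (mem_chordDiagrams_iff_cycleType hcard).1 ((permCongr_mem_chordDiagrams e).2 hα),
      (mem_chordDiagrams_iff_cycleType hcard).1 standardDiagram_mem_chordDiagrams]
  obtain ⟨c, hc⟩ := isConj_iff.1 hconj
  exact ⟨e.trans c, hc⟩

theorem succ_mul_card_filter_fullCycles (hX : Fintype.card X = 2 * n) (hn : n ≠ 0)
    (heven : Even n) (hα : α ∈ chordDiagrams X) :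
    (n + 1) * #{σ ∈ fullCycles X | α * σ ∈ fullCycles X} = (2 * n - 1)! := by
  obtain ⟨e, he⟩ := exists_permCongr_eq_standardDiagram hX hα
  have htransport : #{σ ∈ fullCycles X | α * σ ∈ fullCycles X} =
      #{σ ∈ fullCycles (Fin n × Bool) | standardDiagram (Fin n) * σ ∈ fullCycles _} := by
    refine card_equiv e.permCongr fun σ => ?_
    rw [mem_filter, mem_filter, permCongr_mem_fullCycles, ← he, ← permCongr_mul,
      permCongr_mem_fullCycles]
  obtain ⟨m, rfl⟩ := Nat.exists_eq_add_one_of_ne_zero hn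
  have hm : (-1 : ℤ) ^ m = -1 := (Nat.even_add_one.1 heven |> Nat.not_even_iff_odd.1).neg_one_pow
  have hsum := sum_range_neg_one_pow_mul_choose_mul_factorial m
  rw [hm, Nat.factorial_succ (2 * m + 2), Nat.factorial_succ (2 * m + 1)] at hsum
  have hne : (4 * (m + 1) : ℤ) ≠ 0 := by omega
  rw [htransport, show 2 * (m + 1) - 1 = 2 * m + 1 by omega]
  zify
  refine mul_left_cancel₀ hne ?_
  rw [card_filter_standardDiagram_mul_mem_fullCycles (Fintype.card_fin (m + 1))]
  push_cast at hsum ⊢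
  linear_combination -hsum

theorem card_filter_chordDiagrams_eq (hX : 2 ≤ Fintype.card X) (hσ : σ ∈ fullCycles X)
    (hζ : ζ ∈ fullCycles X) :
    #{α ∈ chordDiagrams X | σ * α ∈ fullCycles X} =
      #{α ∈ chordDiagrams X | ζ * α ∈ fullCycles X} := by
  have hconj : IsConj σ ζ := by
    rw [isConj_iff_cycleType_eq, (mem_fullCycles_iff_cycleType hX).1 hσ,
      (mem_fullCycles_iff_cycleType hX).1 hζ]
  obtain ⟨c, rfl⟩ := isConj_iff.1 hconj
  refine card_equiv (MulAut.conj c).toEquiv fun α => ?_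
  have hα : c * α * c⁻¹ ∈ chordDiagrams X ↔ α ∈ chordDiagrams X := permCongr_mem_chordDiagrams c
  have hmul : c * σ * c⁻¹ * (c * α * c⁻¹) = c * (σ * α) * c⁻¹ := by group
  change _ ↔ c * α * c⁻¹ ∈ _
  rw [mem_filter, mem_filter, hα, hmul, conj_mem_fullCycles]

theorem succ_mul_card_filter_chordDiagrams (hX : Fintype.card X = 2 * n) (hn : n ≠ 0)
    (heven : Even n) (hζ : ζ ∈ fullCycles X) :
    (n + 1) * #{α ∈ chordDiagrams X | ζ * α ∈ fullCycles X} = #(chordDiagrams X) := by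
  have : Nonempty X := Fintype.card_pos_iff.1 (by omega)
  refine Nat.eq_of_mul_eq_mul_left (Nat.factorial_pos (2 * n - 1)) ?_
  calc (2 * n - 1)! * ((n + 1) * #{α ∈ chordDiagrams X | ζ * α ∈ fullCycles X})
      = (n + 1) * ∑ σ ∈ fullCycles X, #{α ∈ chordDiagrams X | σ * α ∈ fullCycles X} := by
        rw [sum_congr rfl fun σ hσ => card_filter_chordDiagrams_eq (by omega) hσ hζ,
          sum_const, card_fullCycles, hX, smul_eq_mul, mul_left_comm]
    _ = (n + 1) * ∑ α ∈ chordDiagrams X, #{σ ∈ fullCycles X | σ * α ∈ fullCycles X} :=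
        congrArg _ (sum_card_bipartiteAbove_eq_sum_card_bipartiteBelow _)
    _ = ∑ α ∈ chordDiagrams X, (2 * n - 1)! := by
        rw [mul_sum]
        refine sum_congr rfl fun α hα => ?_
        simp only [mul_comm_mem_fullCycles (ρ := α)]
        exact succ_mul_card_filter_fullCycles hX hn heven hα
    _ = (2 * n - 1)! * #(chordDiagrams X) := by rw [sum_const, smul_eq_mul, mul_comm]

theorem card_filter_chordDiagrams_mul_factorial (hX : Fintype.card X = 2 * n) (hn : n ≠ 0)
    (heven : Even n) (hζ : ζ ∈ fullCycles X) :
    #{α ∈ chordDiagrams X | ζ * α ∈ fullCycles X} * (2 ^ n * (n + 1)!) = (2 * n)! := by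
  rw [← card_chordDiagrams_mul_factorial hX hn, ← succ_mul_card_filter_chordDiagrams hX hn heven hζ,
    Nat.factorial_succ]
  ring

end ChordDiagrams

end MaximalChordDiagram

/-- For every positive integer `g`, the number of maximal chord diagrams in
`S_{4g}`, i.e. of fixed-point-free involutions `α` of `Fin (4g)` such that
`ζ_{4g} α` (`ζ = finRotate (4g)`) has exactly one orbit, equals `(4g)! / (4^g * (2g+1)!)`. -/
theorem stmt_18 (g : ℕ) (hg : 0 < g) :
    Nat.card {α : Equiv.Perm (Fin (4 * g)) //
        (∀ i, α (α i) = i) ∧ (∀ i, α i ≠ i) ∧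
          ∀ x y : Fin (4 * g), (finRotate (4 * g) * α).SameCycle x y} =
      (4 * g)! / (4 ^ g * (2 * g + 1)!) := by
  have hX : Fintype.card (Fin (4 * g)) = 2 * (2 * g) := by rw [Fintype.card_fin]; ring
  have hζ : finRotate (4 * g) ∈ MaximalChordDiagram.fullCycles (Fin (4 * g)) := by
    rw [MaximalChordDiagram.mem_fullCycles_iff_cycleType (by omega), Fintype.card_fin]
    exact cycleType_finRotate_of_le (by omega)
  have hcount := MaximalChordDiagram.card_filter_chordDiagrams_mul_factorial hX (by omega)
    (even_two_mul g) hζ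
  rw [← hX, Fintype.card_fin, pow_mul, show 2 ^ 2 = 4 from rfl] at hcount
  refine (Nat.div_eq_of_eq_mul_left (by positivity) ?_).symm
  rw [← hcount, Nat.card_eq_fintype_card, Fintype.card_subtype]
  congr 2
  ext α
  simp only [Finset.mem_filter, MaximalChordDiagram.mem_chordDiagrams,
    MaximalChordDiagram.mem_fullCycles, Finset.mem_univ, true_and, and_assoc]
end

section
/- Let n ≥ 1 and write n = 4t + q with t, q nonnegative integers and 0 ≤ q ≤ 3. Then the number of maximal quasi-diagrams in S_n, i.e. involutions α ∈ S_n such that ζ_n·α has exactly one orbit on {1,…,n}, equals Σ_{i=0}^{t} C(n, 4i)·ε_i, where ε_0 = 1 and ε_i = (4i)! / (4^i · (2i+1)!) for i ≥ 1, and C(n, k) denotes the binomial coefficient. -/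
open Nat

/-!
For a permutation `π` and a point `x`, sum `(-1) ^ #{orbits in S}` over the unions `S` of `π`-orbits
that avoid `x`. Toggling an orbit that misses `x` reverses the sign, so the sum is `1` if `π` is
transitive and `0` otherwise. Taking `π = ζ * α`, summing over all involutions `α` and exchanging
the sums writes the number of maximal quasi-diagrams as a sum of total weights of sets `S` avoiding
`0`. If `ζ` leaves `S` at two points, conjugating `α` by their transposition reverses the sign and
the total weight vanishes. The remaining sets are `∅`, which counts all involutions, and the
intervals `(p, e]`: there `α` must swap `p` and `e` and preserve `(p, e)`, so the weight is minus a
signed count of involutions of the inside times a count of involutions of the outside. The resulting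
convolution of double factorials telescopes.
-/

namespace MaximalQuasiDiagram

open Equiv Equiv.Perm Finset

section BinomialTransform

theorem sum_antidiagonal_choose_mul_choose (n a b : ℕ) :
    ∑ p ∈ antidiagonal n, p.1.choose a * p.2.choose b = (n + 1).choose (a + b + 1) := by
  induction n generalizing a with
  | zero => cases a <;> cases b <;> simp [Nat.choose_eq_zero_of_lt]
  | succ n ih =>
    rw [Finset.Nat.sum_antidiagonal_succ]
    cases a with
    | zero =>
      have h := ih 0
      simp only [Nat.choose_zero_right, one_mul, zero_add] at h ⊢
      rw [h, Nat.choose_succ_succ' (n + 1)]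
    | succ a =>
      simp only [Nat.choose_zero_succ, zero_mul, zero_add, Nat.choose_succ_succ' _ a, add_mul,
        sum_add_distrib, ih]
      rw [add_right_comm a 1 b, Nat.choose_succ_succ' (n + 1)]

theorem sum_antidiagonal_choose_mul_mul_choose_pred (n a b : ℕ) :
    ∑ p ∈ antidiagonal n, p.1.choose a * (p.2 * (p.2 - 1).choose b) =
      (b + 1) * (n + 1).choose (a + b + 2) := by
  have absorb (j : ℕ) : j * (j - 1).choose b = (b + 1) * j.choose (b + 1) := by
    cases j with
    | zero => simp
    | succ j => rw [Nat.add_sub_cancel, Nat.add_one_mul_choose_eq, mul_comm]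
  simp only [absorb, mul_left_comm _ (b + 1), ← mul_sum, sum_antidiagonal_choose_mul_choose,
    ← add_assoc]

variable {R : Type*} [CommSemiring R]

/-- The transform `n ↦ ∑ₖ a k * C(n, 2k)` of a sequence `a`. It turns weights of perfect matchings
of `2k` points into weights of all involutions of `n` points. -/
def evenBinomialTransform (a : ℕ → R) (n : ℕ) : R :=
  ∑ k ∈ range (n + 1), a k * n.choose (2 * k)

theorem evenBinomialTransform_eq_sum_range (a : ℕ → R) {n N : ℕ} (hN : n < 2 * N) :
    evenBinomialTransform a n = ∑ k ∈ range N, a k * n.choose (2 * k) := by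
  have vanish {k M : ℕ} (hM : n < 2 * M) (hk : k ∉ range M) : a k * (n.choose (2 * k) : R) = 0 := by
    rw [mem_range] at hk
    rw [Nat.choose_eq_zero_of_lt (by omega), Nat.cast_zero, mul_zero]
  rcases le_total (n + 1) N with h | h
  · exact sum_subset (range_mono h) fun k _ hk => vanish (by omega) hk
  · exact (sum_subset (range_mono h) fun k _ hk => vanish hN hk).symm

theorem sum_range_mul_choose_eq_sum_antidiagonal (f : ℕ → ℕ → R) {n N : ℕ} (hN : n < 2 * N) :
    ∑ i ∈ range N, ∑ j ∈ range N, f i j * n.choose (2 * (i + j + 1)) =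
      ∑ k ∈ range N, (∑ p ∈ antidiagonal k, f p.1 p.2) * n.choose (2 * (k + 1)) := by
  calc ∑ i ∈ range N, ∑ j ∈ range N, f i j * (n.choose (2 * (i + j + 1)) : R)
      = ∑ i ∈ range N, ∑ j ∈ range (N - i), f i j * (n.choose (2 * (i + j + 1)) : R) := by
        refine sum_congr rfl fun i _ => (sum_subset (range_mono (Nat.sub_le N i)) ?_).symm
        intro j _ hj
        rw [mem_range] at hj
        rw [Nat.choose_eq_zero_of_lt (by omega), Nat.cast_zero, mul_zero]
    _ = ∑ k ∈ range N, ∑ i ∈ range (k + 1), f i (k - i) * (n.choose (2 * (i + (k - i) + 1)) : R) :=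
        (sum_range_diag_flip N fun i j => f i j * (n.choose (2 * (i + j + 1)) : R)).symm
    _ = _ := by
        refine sum_congr rfl fun k _ => ?_
        rw [sum_mul, Finset.Nat.sum_antidiagonal_eq_sum_range_succ
          fun i j => f i j * (n.choose (2 * (k + 1)) : R)]
        refine sum_congr rfl fun i hi => ?_
        rw [Nat.add_sub_cancel' (mem_range_succ_iff.1 hi)]

theorem sum_antidiagonal_evenBinomialTransform_mul (a b : ℕ → R) (n : ℕ) :
    ∑ p ∈ antidiagonal n,
        p.2 * (evenBinomialTransform a p.1 * evenBinomialTransform b (p.2 - 1)) =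
      ∑ k ∈ range (n + 1),
        (∑ p ∈ antidiagonal k, a p.1 * ((2 * p.2 + 1) * b p.2)) * (n + 1).choose (2 * (k + 1)) := by
  rw [← sum_range_mul_choose_eq_sum_antidiagonal (fun i j => a i * ((2 * j + 1) * b j))
    (by omega : n + 1 < 2 * (n + 1))]
  calc _ = ∑ p ∈ antidiagonal n, ∑ i ∈ range (n + 1), ∑ j ∈ range (n + 1),
        a i * b j * ((p.1.choose (2 * i) * (p.2 * (p.2 - 1).choose (2 * j)) : ℕ) : R) := by
        refine sum_congr rfl fun p hp => ?_
        have hp' := mem_antidiagonal.1 hp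
        rw [evenBinomialTransform_eq_sum_range a (by omega : p.1 < 2 * (n + 1)),
          evenBinomialTransform_eq_sum_range b (by omega : p.2 - 1 < 2 * (n + 1)), sum_mul_sum]
        simp only [mul_sum]
        refine sum_congr rfl fun i _ => sum_congr rfl fun j _ => ?_
        push_cast
        ring
    _ = _ := by
        rw [sum_comm]
        refine sum_congr rfl fun i _ => ?_
        rw [sum_comm]
        refine sum_congr rfl fun j _ => ?_
        rw [← mul_sum, ← Nat.cast_sum, sum_antidiagonal_choose_mul_mul_choose_pred,
          show 2 * (i + j + 1) = 2 * i + 2 * j + 2 by ring]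
        push_cast
        ring

end BinomialTransform

section Coefficients

/-- The number `(2k - 1)!!` of perfect matchings of `2k` points; truncated subtraction gives the
correct value `1` at `k = 0`. -/
def numMatchings (k : ℕ) : ℕ := (2 * k - 1)‼

@[simp]
theorem numMatchings_zero : numMatchings 0 = 1 := rfl

theorem numMatchings_succ (k : ℕ) : numMatchings (k + 1) = (2 * k + 1) * numMatchings k :=
  Nat.doubleFactorial_add_one (2 * k)

theorem factorial_two_mul (k : ℕ) : (2 * k)! = numMatchings k * (2 ^ k * k !) := by
  cases k with
  | zero => rfl
  | succ k =>
    rw [← Nat.doubleFactorial_two_mul]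
    exact (Nat.factorial_eq_mul_doubleFactorial (2 * k + 1)).trans (mul_comm _ _)

/-- The alternating convolution `∑_{i + j = k} (-1)ⁱ (2i-1)!! (2j+1)!!`, the coefficient of
`C(n, 2k+2)` in the contribution of the intervals to the count of maximal quasi-diagrams, up to
sign. -/
def alternatingConvolution (k : ℕ) : ℤ :=
  ∑ p ∈ antidiagonal k, (-1) ^ p.1 * numMatchings p.1 * ((2 * p.2 + 1) * numMatchings p.2)

theorem two_mul_add_two_mul_alternatingConvolution (k : ℕ) :
    2 * (k + 2) * alternatingConvolution k = (2 * k + 3 + (-1) ^ k) * numMatchings (k + 1) := by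
  let g (i : ℕ) : ℤ := (-1) ^ i * numMatchings i * numMatchings (k + 2 - i)
  have telescope (i : ℕ) (hi : i ∈ range (k + 1)) :
      2 * (k + 2) *
          ((-1) ^ i * numMatchings i * ((2 * (k - i : ℕ) + 1) * numMatchings (k - i)) : ℤ) =
        g i - g (i + 1) := by
    obtain ⟨j, rfl⟩ := Nat.exists_eq_add_of_le (mem_range_succ_iff.1 hi)
    simp only [g]
    rw [show i + j - i = j by omega, show i + j + 2 - i = j + 1 + 1 by omega,
      show i + j + 2 - (i + 1) = j + 1 by omega, numMatchings_succ (j + 1), numMatchings_succ j,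
      numMatchings_succ i]
    push_cast
    ring
  rw [alternatingConvolution, Finset.Nat.sum_antidiagonal_eq_sum_range_succ
      (fun i j => ((-1) ^ i * numMatchings i * ((2 * j + 1) * numMatchings j) : ℤ)),
    mul_sum, sum_congr rfl telescope, sum_range_sub']
  simp only [g, show k + 2 - (k + 1) = 0 + 1 by omega, Nat.sub_zero, numMatchings_succ (k + 1),
    numMatchings_succ 0, numMatchings_zero]
  push_cast
  ring

/-- The coefficient of `C(n, 2k)` in the number of maximal quasi-diagrams in `S_n`. -/
def maximalCoeff : ℕ → ℤ
  | 0 => 1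
  | k + 1 => numMatchings (k + 1) - alternatingConvolution k

theorem two_mul_succ_mul_maximalCoeff (k : ℕ) :
    2 * (k + 1) * maximalCoeff k = (1 + (-1) ^ k) * numMatchings k := by
  cases k with
  | zero => simp [maximalCoeff]
  | succ k =>
    rw [maximalCoeff]
    push_cast
    linear_combination -two_mul_add_two_mul_alternatingConvolution k

theorem maximalCoeff_of_odd {k : ℕ} (hk : Odd k) : maximalCoeff k = 0 := by
  have h := two_mul_succ_mul_maximalCoeff k
  rw [hk.neg_one_pow, add_neg_cancel, zero_mul] at h
  exact (mul_eq_zero.1 h).resolve_left (by omega)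

theorem maximalCoeff_two_mul (i : ℕ) :
    maximalCoeff (2 * i) = ((4 * i)! / (4 ^ i * (2 * i + 1)!) : ℕ) := by
  have hcoeff : (2 * i + 1) * maximalCoeff (2 * i) = numMatchings (2 * i) := by
    have h := two_mul_succ_mul_maximalCoeff (2 * i)
    rw [(even_two_mul i).neg_one_pow] at h
    push_cast at h
    linarith
  have hnonneg : 0 ≤ maximalCoeff (2 * i) := by
    refine nonneg_of_mul_nonneg_right (a := (2 * i + 1 : ℤ)) ?_ (by positivity)
    rw [hcoeff]
    positivity
  lift maximalCoeff (2 * i) to ℕ using hnonneg with e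
  norm_cast at hcoeff ⊢
  refine (Nat.div_eq_of_eq_mul_left (by positivity) ?_).symm
  rw [show 4 * i = 2 * (2 * i) by ring, factorial_two_mul, ← hcoeff, Nat.factorial_succ, pow_mul]
  norm_num
  ring

theorem evenBinomialTransform_numMatchings_sub_eq (n : ℕ) :
    evenBinomialTransform (fun k => (numMatchings k : ℤ)) (n + 1) -
        ∑ k ∈ range (n + 1), alternatingConvolution k * (n + 1).choose (2 * (k + 1)) =
      evenBinomialTransform maximalCoeff (n + 1) := by
  simp only [evenBinomialTransform]
  rw [sum_range_succ' _ (n + 1), sum_range_succ' _ (n + 1), add_sub_right_comm, ← sum_sub_distrib]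
  simp only [maximalCoeff, numMatchings_zero, Nat.cast_one, sub_mul]

theorem evenBinomialTransform_maximalCoeff (n : ℕ) :
    evenBinomialTransform maximalCoeff n =
      (∑ i ∈ range (n / 4 + 1), n.choose (4 * i) * ((4 * i)! / (4 ^ i * (2 * i + 1)!)) : ℕ) := by
  rw [evenBinomialTransform, Nat.cast_sum]
  refine (sum_of_injOn (2 * ·) (mul_right_injective₀ two_ne_zero).injOn ?_ ?_ ?_).symm
  · intro i hi
    simp only [coe_range, Set.mem_Iio] at hi ⊢
    omega
  · intro k _ hk
    rcases Nat.even_or_odd' k with ⟨i, rfl | rfl⟩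
    · have hi : n < 2 * (2 * i) := by
        by_contra h
        exact hk ⟨i, by simp only [coe_range, Set.mem_Iio]; omega, rfl⟩
      rw [Nat.choose_eq_zero_of_lt hi, Nat.cast_zero, mul_zero]
    · rw [maximalCoeff_of_odd (odd_two_mul_add_one i), zero_mul]
  · intro i _
    rw [maximalCoeff_two_mul, ← mul_assoc, show 2 * 2 = 4 from rfl]
    push_cast
    ring

end Coefficients

section Involutions

variable (V : Type*) [Fintype V] [DecidableEq V]

/-- The involutions of `V`, i.e. the quasi-diagrams on `V`; the identity is one of them. -/
def involutions : Finset (Perm V) := {σ | σ ^ 2 = 1}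

variable {V} in
theorem mem_involutions {σ : Perm V} : σ ∈ involutions V ↔ ∀ x, σ (σ x) = x := by
  simp [involutions, sq, Perm.ext_iff]

variable {V} in
theorem cycleType_eq_replicate_two_iff {σ : Perm V} {k : ℕ} :
    σ.cycleType = Multiset.replicate k 2 ↔ σ ^ 2 = 1 ∧ σ.cycleType.card = k := by
  constructor
  · intro h
    refine ⟨pow_prime_eq_one_iff.2 fun c hc => ?_, by rw [h, Multiset.card_replicate]⟩
    exact Multiset.eq_of_mem_replicate (h ▸ hc)
  · rintro ⟨h, rfl⟩
    exact cycleType_of_pow_prime_eq_one h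

theorem card_cycleType_eq_replicate_two (k : ℕ) :
    #{σ : Perm V | σ.cycleType = Multiset.replicate k 2} =
      (Fintype.card V).choose (2 * k) * numMatchings k := by
  have h := card_of_cycleType_mul_eq V (Multiset.replicate k 2)
  have hcount : ∏ n ∈ (Multiset.replicate k 2).toFinset, ((Multiset.replicate k 2).count n)! =
      k ! := by
    rcases eq_or_ne k 0 with rfl | hk <;> simp [Multiset.toFinset_replicate, *]
  have htwo : ∀ a ∈ Multiset.replicate k 2, 2 ≤ a :=
    fun a ha => (Multiset.eq_of_mem_replicate ha).ge
  simp only [hcount, Multiset.sum_replicate, Multiset.prod_replicate, smul_eq_mul, mul_comm k 2,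
    and_iff_left htwo] at h
  have hpos : 0 < (Fintype.card V - 2 * k)! * 2 ^ k * k ! := by positivity
  refine Nat.eq_of_mul_eq_mul_right hpos (h.trans ?_)
  split_ifs with hk
  · rw [← Nat.choose_mul_factorial_mul_factorial hk, factorial_two_mul]
    ring
  · rw [Nat.choose_eq_zero_of_lt (not_le.1 hk), zero_mul, zero_mul]

theorem sum_involutions_pow_card_cycleType {R : Type*} [CommSemiring R] (x : R) :
    ∑ σ ∈ involutions V, x ^ σ.cycleType.card =
      evenBinomialTransform (fun k => x ^ k * numMatchings k) (Fintype.card V) := by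
  have hmaps (σ : Perm V) (_ : σ ∈ involutions V) :
      σ.cycleType.card ∈ range (Fintype.card V + 1) := by
    refine mem_range_succ_iff.2 (le_trans ?_ σ.sum_cycleType_le)
    simpa using Multiset.card_nsmul_le_sum fun a ha => (one_lt_of_mem_cycleType ha).le
  rw [← sum_fiberwise_of_maps_to hmaps]
  refine sum_congr rfl fun k _ => ?_
  rw [sum_congr rfl fun σ hσ => by rw [(mem_filter.1 hσ).2], sum_const, nsmul_eq_mul, involutions,
    filter_filter]
  simp only [← cycleType_eq_replicate_two_iff, card_cycleType_eq_replicate_two]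
  push_cast
  ring

theorem card_involutions :
    (#(involutions V) : ℤ) =
      evenBinomialTransform (fun k => (numMatchings k : ℤ)) (Fintype.card V) := by
  simpa using sum_involutions_pow_card_cycleType V (1 : ℤ)

theorem sum_involutions_sign :
    ∑ σ ∈ involutions V, (sign σ : ℤ) =
      evenBinomialTransform (fun k => (-1) ^ k * (numMatchings k : ℤ)) (Fintype.card V) := by
  rw [← sum_involutions_pow_card_cycleType]
  refine sum_congr rfl fun σ hσ => ?_
  rw [involutions, mem_filter_univ] at hσ
  rw [sign_of_cycleType', cycleType_eq_replicate_two_iff.2 ⟨hσ, rfl⟩]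
  simp

end Involutions

section OrbitWeight

theorem apply_mem_iff_of_fixed {V : Type*} {ρ : Perm V} {S : Finset V} (hρ : ∀ x ∈ S, ρ x = x)
    (x : V) : ρ x ∈ S ↔ x ∈ S :=
  ⟨fun hx => ρ.injective (hρ _ hx) ▸ hx, fun hx => (hρ x hx).symm ▸ hx⟩

variable {V : Type*} [Fintype V] [DecidableEq V] {π ρ : Perm V} {S T : Finset V}

/-- `(-1) ^ c` if `S` is a union of `c` orbits of `π`, and `0` if `S` is not `π`-invariant. It is
encoded through the sign of the restriction of `π` to `S`, which is `(-1) ^ (#S - c)`. -/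
def orbitWeight (π : Perm V) (S : Finset V) : ℤ :=
  if h : ∀ x, π x ∈ S ↔ x ∈ S then (-1) ^ #S * sign (π.subtypePerm h) else 0

theorem orbitWeight_of_invariant (h : ∀ x, π x ∈ S ↔ x ∈ S) :
    orbitWeight π S = (-1) ^ #S * sign (π.subtypePerm h) :=
  dif_pos h

theorem orbitWeight_of_not_invariant (h : ¬∀ x, π x ∈ S ↔ x ∈ S) : orbitWeight π S = 0 :=
  dif_neg h

@[simp]
theorem orbitWeight_empty (π : Perm V) : orbitWeight π ∅ = 1 := by
  rw [orbitWeight_of_invariant (by simp), Subsingleton.elim (π.subtypePerm _) 1]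
  simp

theorem orbitWeight_mul_of_invariant (hρ : ∀ x, ρ x ∈ S ↔ x ∈ S) :
    orbitWeight (π * ρ) S = orbitWeight π S * sign (ρ.subtypePerm hρ) := by
  have hinv : (∀ x, (π * ρ) x ∈ S ↔ x ∈ S) ↔ ∀ x, π x ∈ S ↔ x ∈ S := by
    rw [← ρ.forall_congr_right (q := fun x => π x ∈ S ↔ x ∈ S)]
    exact forall_congr' fun x => by rw [hρ, mul_apply]
  by_cases hπ : ∀ x, π x ∈ S ↔ x ∈ S
  · rw [orbitWeight_of_invariant (hinv.2 hπ), orbitWeight_of_invariant hπ, mul_assoc,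
      ← Units.val_mul, ← Perm.sign_mul, subtypePerm_mul π ρ hπ hρ]
  · rw [orbitWeight_of_not_invariant (hinv.not.2 hπ), orbitWeight_of_not_invariant hπ, zero_mul]

theorem orbitWeight_mul_of_support_subset (hρ : ∀ x, ρ x ≠ x → x ∈ S) :
    orbitWeight (π * ρ) S = orbitWeight π S * sign ρ := by
  have hρS (x) : ρ x ∈ S ↔ x ∈ S := by
    by_cases hx : ρ x = x
    · rw [hx]
    · exact iff_of_true (hρ _ (ρ.injective.ne hx)) (hρ x hx)
  rw [orbitWeight_mul_of_invariant hρS]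
  congr 2
  convert! sign_subtypePerm ρ hρS hρ

theorem orbitWeight_mul_of_fixed (hρ : ∀ x ∈ S, ρ x = x) :
    orbitWeight (π * ρ) S = orbitWeight π S := by
  have hone : ρ.subtypePerm (apply_mem_iff_of_fixed hρ) = 1 :=
    Equiv.ext fun x => Subtype.ext (hρ x x.2)
  rw [orbitWeight_mul_of_invariant (apply_mem_iff_of_fixed hρ), hone, Perm.sign_one, Units.val_one,
    mul_one]

theorem orbitWeight_mul_left_of_fixed (hρ : ∀ x ∈ S, ρ x = x) :
    orbitWeight (ρ * π) S = orbitWeight π S := by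
  have hρS := apply_mem_iff_of_fixed hρ
  by_cases hπ : ∀ x, π x ∈ S ↔ x ∈ S
  · have hρπ (x) : (ρ * π) x ∈ S ↔ x ∈ S := (hρS _).trans (hπ x)
    rw [orbitWeight_of_invariant hρπ, orbitWeight_of_invariant hπ]
    congr 3
    exact Equiv.ext fun x => Subtype.ext (hρ _ ((hπ x).2 x.2))
  · rw [orbitWeight_of_not_invariant hπ, orbitWeight_of_not_invariant]
    simpa only [mul_apply, hρS] using hπ

theorem orbitWeight_union (hST : Disjoint S T) (hS : ∀ x, π x ∈ S ↔ x ∈ S)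
    (hT : ∀ x, π x ∈ T ↔ x ∈ T) :
    orbitWeight π (S ∪ T) = orbitWeight π S * orbitWeight π T := by
  have hU (x) : π x ∈ S ∪ T ↔ x ∈ S ∪ T := by rw [mem_union, mem_union, hS, hT]
  have hmul : ofSubtype (π.subtypePerm hU) =
      ofSubtype (π.subtypePerm hS) * ofSubtype (π.subtypePerm hT) := by
    ext x
    have hdisj : x ∈ S → x ∉ T := fun h => disjoint_left.1 hST h
    by_cases hxT : x ∈ T
    · rw [mul_apply, ofSubtype_subtypePerm_of_mem hT hxT, ofSubtype_subtypePerm_of_not_mem hS,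
        ofSubtype_subtypePerm_of_mem hU (mem_union_right S hxT)]
      rw [hS]
      exact fun hxS => hdisj hxS hxT
    · rw [mul_apply, ofSubtype_subtypePerm_of_not_mem hT hxT]
      by_cases hxS : x ∈ S
      · rw [ofSubtype_subtypePerm_of_mem hS hxS,
          ofSubtype_subtypePerm_of_mem hU (mem_union_left T hxS)]
      · rw [ofSubtype_subtypePerm_of_not_mem hS hxS, ofSubtype_subtypePerm_of_not_mem hU]
        simp [hxS, hxT]
  have hsign := congrArg sign hmul
  rw [Perm.sign_mul, sign_ofSubtype, sign_ofSubtype, sign_ofSubtype] at hsign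
  rw [orbitWeight_of_invariant hU, orbitWeight_of_invariant hS, orbitWeight_of_invariant hT,
    card_union_of_disjoint hST, _root_.pow_add, hsign, Units.val_mul]
  ring

theorem orbitWeight_of_isCycleOn (h : π.IsCycleOn S) (hne : S.Nonempty) :
    orbitWeight π S = -1 := by
  have hinv (x) : π x ∈ S ↔ x ∈ S := h.apply_mem_iff
  rw [orbitWeight_of_invariant hinv]
  rcases hne.exists_eq_singleton_or_nontrivial with ⟨a, rfl⟩ | hS
  · rw [Subsingleton.elim (π.subtypePerm hinv) 1]
    simp
  · have hsupp : (π.subtypePerm hinv).support = univ := by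
      refine eq_univ_of_forall fun x => mem_support.2 fun hx => ?_
      exact h.apply_ne hS x.2 (congrArg Subtype.val hx)
    have hcycle : (π.subtypePerm hinv).IsCycle := h.isCycle_subtypePerm hS
    rw [hcycle.sign, hsupp, Finset.card_univ, Fintype.card_coe, Units.val_neg,
      Units.val_pow_eq_pow_val, Units.val_neg, Units.val_one, mul_neg, ← mul_pow,
      neg_one_mul, neg_neg, one_pow]

/-- The orbit of `y` under `π`, as a finset. -/
def orbitFinset (π : Perm V) (y : V) : Finset V := {z | π.SameCycle y z}

theorem mem_orbitFinset {y z : V} : z ∈ orbitFinset π y ↔ π.SameCycle y z :=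
  mem_filter_univ z

theorem self_mem_orbitFinset (π : Perm V) (y : V) : y ∈ orbitFinset π y :=
  mem_orbitFinset.2 (.refl π y)

theorem isCycleOn_orbitFinset (π : Perm V) (y : V) : π.IsCycleOn (orbitFinset π y) := by
  refine ⟨π.bijOn fun x => ?_, fun a ha b hb => ?_⟩
  · simp only [mem_coe, mem_orbitFinset, sameCycle_apply_right]
  · exact (mem_orbitFinset.1 ha).symm.trans (mem_orbitFinset.1 hb)

theorem orbitFinset_subset (hS : ∀ x, π x ∈ S ↔ x ∈ S) {y : V} (hy : y ∈ S) :
    orbitFinset π y ⊆ S := by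
  intro z hz
  obtain ⟨k, rfl⟩ := (mem_orbitFinset.1 hz).exists_nat_pow_eq
  induction k with
  | zero => exact hy
  | succ k ih =>
    rw [_root_.pow_succ', mul_apply, hS]
    exact ih (mem_orbitFinset.2 ⟨k, rfl⟩)

/-- Toggling an orbit changes the number of orbits in `S` by one. -/
theorem orbitWeight_symmDiff_orbitFinset (π : Perm V) (S : Finset V) (y : V) :
    orbitWeight π (symmDiff S (orbitFinset π y)) = -orbitWeight π S := by
  set O := orbitFinset π y
  have hO (x) : π x ∈ O ↔ x ∈ O := (isCycleOn_orbitFinset π y).apply_mem_iff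
  have hwO : orbitWeight π O = -1 :=
    orbitWeight_of_isCycleOn (isCycleOn_orbitFinset π y) ⟨y, self_mem_orbitFinset π y⟩
  have hinv : (∀ x, π x ∈ symmDiff S O ↔ x ∈ symmDiff S O) ↔ ∀ x, π x ∈ S ↔ x ∈ S := by
    refine forall_congr' fun x => ?_
    rw [mem_symmDiff, mem_symmDiff, hO]
    tauto
  by_cases hS : ∀ x, π x ∈ S ↔ x ∈ S
  swap
  · rw [orbitWeight_of_not_invariant hS, orbitWeight_of_not_invariant (hinv.not.2 hS), neg_zero]
  have hSc (x) : π x ∈ Sᶜ ↔ x ∈ Sᶜ := by rw [mem_compl, mem_compl, hS]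
  have hdiff (x) : π x ∈ S \ O ↔ x ∈ S \ O := by rw [mem_sdiff, mem_sdiff, hS, hO]
  by_cases hy : y ∈ S
  · have hOS : O ⊆ S := orbitFinset_subset hS hy
    have hunion := orbitWeight_union sdiff_disjoint hdiff hO
    rw [sdiff_union_of_subset hOS, hwO] at hunion
    rw [symmDiff_of_ge hOS, hunion, mul_neg_one, neg_neg]
  · have hdisj : Disjoint S O :=
      disjoint_compl_right.mono_right (orbitFinset_subset hSc (mem_compl.2 hy))
    rw [hdisj.symmDiff_eq_sup, sup_eq_union, orbitWeight_union hdisj hS hO, hwO, mul_neg_one]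

theorem sum_orbitWeight_of_notMem (π : Perm V) [Decidable (∀ y z, π.SameCycle y z)] (x : V) :
    ∑ S with x ∉ S, orbitWeight π S = if ∀ y z, π.SameCycle y z then 1 else 0 := by
  split_ifs with h
  · refine (sum_eq_single_of_mem ∅ (by simp) fun S hS hne => ?_).trans (orbitWeight_empty π)
    refine orbitWeight_of_not_invariant fun hinv => (mem_filter_univ S).1 hS ?_
    obtain ⟨y, hy⟩ := nonempty_iff_ne_empty.2 hne
    exact orbitFinset_subset hinv hy (mem_orbitFinset.2 (h y x))
  · obtain ⟨y, hy⟩ : ∃ y, ¬π.SameCycle y x := by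
      by_contra! hx
      exact h fun y z => (hx y).trans (hx z).symm
    refine sum_involution (fun S _ => symmDiff S (orbitFinset π y)) (fun S _ => ?_)
      (fun S _ _ => ?_) (fun S hS => ?_) fun S _ => symmDiff_symmDiff_cancel_right _ _
    · rw [orbitWeight_symmDiff_orbitFinset, add_neg_cancel]
    · rw [Ne, symmDiff_eq_left]
      exact ne_of_mem_of_not_mem' (self_mem_orbitFinset π y) (notMem_empty y)
    · simp only [mem_filter_univ, mem_symmDiff, mem_orbitFinset, hy] at hS ⊢
      tauto

end OrbitWeight

section TotalWeight

variable {V : Type*} [Fintype V] [DecidableEq V] (ζ : Perm V)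

/-- The total weight of `S`: the sum of `orbitWeight (ζ * α) S` over all involutions `α`, which is
the contribution of `S` to the count of the `α` for which `ζ * α` is transitive. -/
def totalWeight (S : Finset V) : ℤ := ∑ α ∈ involutions V, orbitWeight (ζ * α) S

theorem card_transitive_eq_sum_totalWeight
    [DecidablePred fun α : Perm V => ∀ y z, (ζ * α).SameCycle y z] (x : V) :
    (#{α ∈ involutions V | ∀ y z, (ζ * α).SameCycle y z} : ℤ) =
      ∑ S with x ∉ S, totalWeight ζ S := by
  simp only [totalWeight]
  rw [sum_comm, card_filter, Nat.cast_sum]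
  refine sum_congr rfl fun α _ => ?_
  rw [sum_orbitWeight_of_notMem, Nat.cast_ite, Nat.cast_one, Nat.cast_zero]

theorem totalWeight_empty : totalWeight ζ ∅ = #(involutions V) := by
  simp [totalWeight]

variable {ζ}

theorem conj_swap_mem_involutions {α : Perm V} (hα : α ∈ involutions V) (x y : V) :
    swap x y * α * swap x y ∈ involutions V := by
  rw [mem_involutions] at hα ⊢
  simp [hα]

/-- Conjugation by `swap x y` reverses the sign of the weight. -/
theorem totalWeight_eq_zero_of_two_exits {S : Finset V} {x y : V} (hxy : x ≠ y) (hx : x ∈ S)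
    (hy : y ∈ S) (hζx : ζ x ∉ S) (hζy : ζ y ∉ S) : totalWeight ζ S = 0 := by
  have hneg (α : Perm V) :
      orbitWeight (ζ * (swap x y * α * swap x y)) S = -orbitWeight (ζ * α) S := by
    rw [← mul_assoc, ← mul_assoc, orbitWeight_mul_of_support_subset, sign_swap hxy,
      mul_swap_eq_swap_mul, mul_assoc, orbitWeight_mul_left_of_fixed]
    · simp
    · intro z hz
      exact swap_apply_of_ne_of_ne (ne_of_mem_of_not_mem hz hζx) (ne_of_mem_of_not_mem hz hζy)
    · intro z hz
      rcases eq_or_eq_of_swap_apply_ne_self hz with rfl | rfl <;> assumption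
  refine sum_involution (fun α _ => swap x y * α * swap x y) (fun α _ => ?_) (fun α _ hα h => ?_)
    (fun α hα => conj_swap_mem_involutions hα x y) fun α _ => ?_
  · rw [hneg, add_neg_cancel]
  · have := hneg α
    rw [h] at this
    omega
  · simp [mul_assoc]

end TotalWeight

section Glue

variable {V : Type*} [Fintype V] [DecidableEq V] {a e : V} {C : Finset V}

/-- The permutation of `V` that swaps `a` and `e`, acts as `β` on `C`, and acts as `γ` on the
remaining points. -/
def glue (a e : V) (β : Perm C) (γ : Perm ↥(insert a (insert e C))ᶜ) : Perm V :=
  swap a e * ofSubtype β * ofSubtype γ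

variable (β : Perm C) (γ : Perm ↥(insert a (insert e C))ᶜ)

theorem glue_apply_left (ha : a ∉ C) : glue a e β γ a = e := by
  rw [glue, mul_apply, mul_apply, ofSubtype_apply_of_not_mem γ (by simp),
    ofSubtype_apply_of_not_mem β ha, swap_apply_left]

theorem glue_apply_right (he : e ∉ C) : glue a e β γ e = a := by
  rw [glue, mul_apply, mul_apply, ofSubtype_apply_of_not_mem γ (by simp),
    ofSubtype_apply_of_not_mem β he, swap_apply_right]

theorem glue_apply_inside (ha : a ∉ C) (he : e ∉ C) (c : C) : glue a e β γ c = β c := by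
  rw [glue, mul_apply, mul_apply, ofSubtype_apply_of_not_mem γ (by simp), ofSubtype_apply_coe]
  exact swap_apply_of_ne_of_ne (ne_of_mem_of_not_mem (β c).2 ha) (ne_of_mem_of_not_mem (β c).2 he)

theorem glue_apply_outside (d : ↥(insert a (insert e C))ᶜ) : glue a e β γ d = γ d := by
  have hd := (γ d).2
  simp only [mem_compl, mem_insert, not_or] at hd
  rw [glue, mul_apply, mul_apply, ofSubtype_apply_coe, ofSubtype_apply_of_not_mem β hd.2.2,
    swap_apply_of_ne_of_ne hd.1 hd.2.1]

theorem eq_or_eq_or_mem_or_mem_compl (a e : V) (C : Finset V) (x : V) :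
    x = a ∨ x = e ∨ x ∈ C ∨ x ∈ (insert a (insert e C))ᶜ := by
  simp only [mem_compl, mem_insert]
  tauto

theorem glue_injective (ha : a ∉ C) (he : e ∉ C) {β' : Perm C}
    {γ' : Perm ↥(insert a (insert e C))ᶜ} (h : glue a e β γ = glue a e β' γ') :
    β = β' ∧ γ = γ' := by
  constructor
  · ext c
    rw [← glue_apply_inside β γ ha he, h, glue_apply_inside β' γ' ha he]
  · ext d
    rw [← glue_apply_outside β γ, h, glue_apply_outside β' γ']

theorem glue_mem_involutions (ha : a ∉ C) (he : e ∉ C) (hβ : β ∈ involutions C)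
    (hγ : γ ∈ involutions ↥(insert a (insert e C))ᶜ) : glue a e β γ ∈ involutions V := by
  rw [mem_involutions] at hβ hγ ⊢
  intro x
  rcases eq_or_eq_or_mem_or_mem_compl a e C x with rfl | rfl | hx | hx
  · rw [glue_apply_left β γ ha, glue_apply_right β γ he]
  · rw [glue_apply_right β γ he, glue_apply_left β γ ha]
  · lift x to C using hx
    rw [glue_apply_inside β γ ha he, glue_apply_inside β γ ha he, hβ]
  · lift x to ↥(insert a (insert e C))ᶜ using hx
    rw [glue_apply_outside, glue_apply_outside, hγ]

theorem apply_eq_and_apply_mem_iff_of_mem_involutions {α : Perm V} (hα : α ∈ involutions V)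
    (ha : a ∉ C) (he : e ∉ C) (hae : a ≠ e) (h : ∀ x, α x ∈ insert a C ↔ x ∈ insert e C) :
    α e = a ∧ ∀ x, α x ∈ C ↔ x ∈ C := by
  rw [mem_involutions] at hα
  simp only [mem_insert] at h
  have hC {x : V} (hx : x ∈ C) : α x ∈ C := by
    refine ((h x).2 (.inr hx)).resolve_left fun hxa => ?_
    have ha' := (h a).1 (.inr (by rwa [← hxa, hα]))
    exact ha'.elim hae ha
  have hCiff (x : V) : α x ∈ C ↔ x ∈ C := ⟨fun hx => hα x ▸ hC hx, hC⟩
  exact ⟨((h e).2 (.inl rfl)).resolve_right fun hx => he ((hCiff e).1 hx), hCiff⟩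

theorem subtypePerm_mem_involutions {α : Perm V} (hα : α ∈ involutions V) {S : Finset V}
    (h : ∀ x, α x ∈ S ↔ x ∈ S) : α.subtypePerm h ∈ involutions S := by
  rw [mem_involutions] at hα ⊢
  exact fun x => Subtype.ext (hα x)

theorem exists_glue_eq {α : Perm V} (hα : α ∈ involutions V) (ha : a ∉ C) (he : e ∉ C)
    (hae : a ≠ e) (h : ∀ x, α x ∈ insert a C ↔ x ∈ insert e C) :
    ∃ β ∈ involutions C, ∃ γ ∈ involutions ↥(insert a (insert e C))ᶜ, glue a e β γ = α := by
  obtain ⟨hαe, hC⟩ := apply_eq_and_apply_mem_iff_of_mem_involutions hα ha he hae h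
  have hαa : α a = e := by rw [← hαe, mem_involutions.1 hα]
  have hD (x) : α x ∈ (insert a (insert e C))ᶜ ↔ x ∈ (insert a (insert e C))ᶜ := by
    simp only [mem_compl, mem_insert, hC, ← hαe, α.injective.eq_iff]
    rw [← α.injective.eq_iff (a := x) (b := α e), mem_involutions.1 hα]
    tauto
  refine ⟨_, subtypePerm_mem_involutions hα hC, _, subtypePerm_mem_involutions hα hD, ?_⟩
  ext x
  rcases eq_or_eq_or_mem_or_mem_compl a e C x with rfl | rfl | hx | hx
  · rw [glue_apply_left _ _ ha, hαa]
  · rw [glue_apply_right _ _ he, hαe]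
  · lift x to C using hx
    rw [glue_apply_inside _ _ ha he, subtypePerm_apply]
  · lift x to ↥(insert a (insert e C))ᶜ using hx
    rw [glue_apply_outside, subtypePerm_apply]

theorem orbitWeight_mul_glue (ζ : Perm V) :
    orbitWeight (ζ * glue a e β γ) (insert e C) =
      orbitWeight (ζ * swap a e) (insert e C) * sign β := by
  have hβ (x : V) (hx : ofSubtype β x ≠ x) : x ∈ insert e C := by
    by_contra h
    exact hx (ofSubtype_apply_of_not_mem β fun hxC => h (mem_insert_of_mem hxC))
  have hγ (x : V) (hx : x ∈ insert e C) : ofSubtype γ x = x :=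
    ofSubtype_apply_of_not_mem γ (notMem_compl.2 (mem_insert_of_mem hx))
  rw [glue, ← mul_assoc, ← mul_assoc, orbitWeight_mul_of_fixed hγ,
    orbitWeight_mul_of_support_subset hβ, sign_ofSubtype]

/-- An involution `α` for which `insert e C` is `ζ * α`-invariant must swap `a` and `e` and
preserve `C`, so only the glued involutions contribute. -/
theorem totalWeight_insert (ζ : Perm V) (ha : a ∉ C) (he : e ∉ C) (hae : a ≠ e)
    (hζ : ∀ x, ζ x ∈ insert e C ↔ x ∈ insert a C) :
    totalWeight ζ (insert e C) =
      orbitWeight (ζ * swap a e) (insert e C) *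
        ((∑ β ∈ involutions C, (sign β : ℤ)) * #(involutions ↥(insert a (insert e C))ᶜ)) := by
  calc totalWeight ζ (insert e C)
      = ∑ p ∈ involutions C ×ˢ involutions ↥(insert a (insert e C))ᶜ,
          orbitWeight (ζ * swap a e) (insert e C) * sign p.1 := by
        refine (sum_of_injOn (fun p => glue a e p.1 p.2) ?_ ?_ ?_ fun p _ =>
          (orbitWeight_mul_glue p.1 p.2 ζ).symm).symm
        · rintro ⟨β, γ⟩ _ ⟨β', γ'⟩ _ h
          exact Prod.ext_iff.2 (glue_injective β γ ha he h)
        · rintro ⟨β, γ⟩ hp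
          obtain ⟨hβ, hγ⟩ := mem_product.1 hp
          exact glue_mem_involutions β γ ha he hβ hγ
        · intro α hα hglue
          refine orbitWeight_of_not_invariant fun h => hglue ?_
          obtain ⟨β, hβ, γ, hγ, rfl⟩ := exists_glue_eq hα ha he hae fun x => (hζ _).symm.trans (h x)
          exact ⟨(β, γ), mem_coe.2 (mem_product.2 ⟨hβ, hγ⟩), rfl⟩
    _ = _ := by
        simp only [sum_product, sum_const, nsmul_eq_mul, ← mul_sum, mul_comm]

end Glue

section Intervals

variable {m : ℕ}

theorem finRotate_castSucc (i : Fin m) : finRotate (m + 1) i.castSucc = i.succ :=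
  finRotate_of_lt i.2

theorem Ioc_induction {P : Fin (m + 1) → Prop} {p e : Fin (m + 1)}
    (base : P (finRotate (m + 1) p))
    (step : ∀ x, p < x → x < e → P x → P (finRotate (m + 1) x)) : ∀ x ∈ Ioc p e, P x := by
  intro x hx
  rw [mem_Ioc] at hx
  induction x using Fin.induction with
  | zero => exact absurd hx.1 (Fin.not_lt_zero p)
  | succ x ih =>
    have hxe : x.castSucc < e := Fin.castSucc_lt_iff_succ_le.2 hx.2
    rw [← finRotate_castSucc]
    rcases (Fin.le_castSucc_iff.2 hx.1).eq_or_lt with rfl | hpx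
    · exact base
    · exact step _ hpx hxe (ih ⟨hpx, hxe.le⟩)

theorem exists_eq_Ioc {S : Finset (Fin (m + 1))} (hne : S.Nonempty) (h0 : 0 ∉ S)
    (hexit : ∀ x ∈ S, ∀ y ∈ S, finRotate (m + 1) x ∉ S → finRotate (m + 1) y ∉ S → x = y) :
    ∃ p e, p < e ∧ S = Ioc p e := by
  obtain ⟨p, hp⟩ := Fin.exists_succ_eq.2 (ne_of_mem_of_not_mem (S.min'_mem hne) h0)
  have hmax : finRotate (m + 1) (S.max' hne) ∉ S := by
    rcases Fin.eq_castSucc_or_eq_last (S.max' hne) with ⟨e, he⟩ | hlast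
    · rw [he, finRotate_castSucc]
      exact fun h => (he ▸ S.le_max' _ h).not_gt e.castSucc_lt_succ
    · rwa [hlast, finRotate_last]
  refine ⟨p.castSucc, S.max' hne, ?_, Subset.antisymm (fun x hx => ?_) ?_⟩
  · exact Fin.castSucc_lt_iff_succ_le.2 (hp ▸ S.min'_le _ (S.max'_mem hne))
  · exact mem_Ioc.2 ⟨Fin.castSucc_lt_iff_succ_le.2 (hp ▸ S.min'_le x hx), S.le_max' x hx⟩
  · refine Ioc_induction ?_ fun x _ hxe hx => ?_
    · rw [finRotate_castSucc, hp]
      exact S.min'_mem hne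
    · by_contra hζx
      exact hxe.ne (hexit x hx _ (S.max'_mem hne) hζx hmax)

theorem finRotate_mem_insert_iff {p e : Fin (m + 1)} (hpe : p < e) (x : Fin (m + 1)) :
    finRotate (m + 1) x ∈ insert e (Ioo p e) ↔ x ∈ insert p (Ioo p e) := by
  rw [Ioo_insert_right hpe, Ioo_insert_left hpe, mem_Ioc, mem_Ico]
  rcases Fin.eq_castSucc_or_eq_last x with ⟨x, rfl⟩ | rfl
  · rw [finRotate_castSucc, Fin.castSucc_lt_iff_succ_le, Fin.le_castSucc_iff]
  · simp [Fin.le_last]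

theorem isCycleOn_finRotate_mul_swap {p e : Fin (m + 1)} (hpe : p < e) :
    (finRotate (m + 1) * swap p e).IsCycleOn (Ioc p e : Finset (Fin (m + 1))) := by
  have hsame : ∀ x ∈ Ioc p e, (finRotate (m + 1) * swap p e).SameCycle e x := by
    refine Ioc_induction ?_ fun x hpx hxe hx => ?_
    · simpa using sameCycle_apply_right.2 (.refl (finRotate (m + 1) * swap p e) e)
    · simpa [swap_apply_of_ne_of_ne hpx.ne' hxe.ne] using sameCycle_apply_right.2 hx
  refine ⟨Equiv.bijOn _ fun x => ?_, fun x hx y hy => (hsame x hx).symm.trans (hsame y hy)⟩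
  rw [mem_coe, mem_coe, mul_apply, ← Ioo_insert_right hpe, finRotate_mem_insert_iff hpe]
  grind [left_notMem_Ioo, right_notMem_Ioo]

theorem totalWeight_Ioc {p e : Fin (m + 1)} (hpe : p < e) :
    totalWeight (finRotate (m + 1)) (Ioc p e) =
      -(evenBinomialTransform (fun k => (-1) ^ k * (numMatchings k : ℤ)) (e - 1 - p) *
        evenBinomialTransform (fun k => (numMatchings k : ℤ)) (m - (e - 1 - p) - 1)) := by
  have hp : p ∉ Ioo p e := left_notMem_Ioo
  have he : e ∉ Ioo p e := right_notMem_Ioo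
  have hcard : #(insert p (insert e (Ioo p e)))ᶜ = m - (e - 1 - p) - 1 := by
    rw [card_compl, Ioo_insert_right hpe, Ioc_insert_left hpe.le, Fin.card_Icc, Fintype.card_fin]
    omega
  have h := totalWeight_insert (finRotate (m + 1)) hp he hpe.ne (finRotate_mem_insert_iff hpe)
  rw [Ioo_insert_right hpe, orbitWeight_of_isCycleOn (isCycleOn_finRotate_mul_swap hpe)
      (nonempty_Ioc.2 hpe), sum_involutions_sign, card_involutions, Fintype.card_coe,
    Fintype.card_coe, Fin.card_Ioo, Nat.sub_right_comm, ← Ioo_insert_right hpe, hcard,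
    neg_one_mul] at h
  rw [← h, Ioo_insert_right hpe]

theorem totalWeight_eq_zero_of_forall_ne_Ioc {S : Finset (Fin (m + 1))} (hne : S.Nonempty)
    (h0 : 0 ∉ S) (hS : ∀ p e, p < e → S ≠ Ioc p e) : totalWeight (finRotate (m + 1)) S = 0 := by
  by_contra hweight
  obtain ⟨p, e, hpe, h⟩ := exists_eq_Ioc hne h0 fun x hx y hy hζx hζy => by
    by_contra hxy
    exact hweight (totalWeight_eq_zero_of_two_exits hxy hx hy hζx hζy)
  exact hS p e hpe h

theorem sum_totalWeight_eq (m : ℕ) :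
    ∑ S with (0 : Fin (m + 1)) ∉ S, totalWeight (finRotate (m + 1)) S =
      #(involutions (Fin (m + 1))) +
        ∑ e : Fin (m + 1), ∑ p ∈ Iio e, totalWeight (finRotate (m + 1)) (Ioc p e) := by
  rw [← add_sum_erase _ _ (by simp : ∅ ∈ _), totalWeight_empty, sum_sigma', add_right_inj]
  symm
  refine sum_of_injOn (fun q => Ioc q.2 q.1) ?_ ?_ ?_ fun _ _ => rfl
  · rintro ⟨e, p⟩ hq ⟨e', p'⟩ hq' h
    simp only [coe_sigma, Set.mem_sigma_iff, mem_coe, mem_univ, mem_Iio, true_and] at hq hq'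
    simp only [← coe_inj, coe_Ioc] at h
    obtain ⟨rfl, rfl⟩ := (Set.Ioc_eq_Ioc_iff (Or.inl hq)).1 h
    rfl
  · rintro ⟨e, p⟩ hq
    simpa using hq
  · intro S hS hIoc
    obtain ⟨hne, h0⟩ := mem_erase.1 hS
    refine totalWeight_eq_zero_of_forall_ne_Ioc (nonempty_iff_ne_empty.2 hne)
      ((mem_filter_univ S).1 h0) fun p e hpe h => hIoc ⟨⟨e, p⟩, by simpa using hpe, h.symm⟩

theorem sum_range_sum_range_eq_sum_antidiagonal {R : Type*} [Semiring R] (g : ℕ → R) (m : ℕ) :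
    ∑ e ∈ range (m + 1), ∑ c ∈ range e, g c = ∑ q ∈ antidiagonal m, q.2 * g q.1 := by
  induction m with
  | zero => simp
  | succ m ih =>
    rw [sum_range_succ, ih, Finset.Nat.sum_antidiagonal_succ', Nat.cast_zero, zero_mul, zero_add,
      ← Finset.Nat.sum_antidiagonal_eq_sum_range_succ (fun c _ => g c), ← sum_add_distrib]
    simp only [Nat.cast_add_one, add_mul, one_mul]

theorem sum_fin_sum_Iio_eq_sum_antidiagonal {R : Type*} [Semiring R] (g : ℕ → R) (m : ℕ) :
    ∑ e : Fin (m + 1), ∑ p ∈ Iio e, g (e - 1 - p) = ∑ q ∈ antidiagonal m, q.2 * g q.1 := by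
  rw [← sum_range_sum_range_eq_sum_antidiagonal, ← Fin.sum_univ_eq_sum_range
    fun e => ∑ c ∈ range e, g c]
  refine sum_congr rfl fun e _ => ?_
  rw [← sum_range_reflect, ← Nat.Iio_eq_range, ← Fin.map_valEmbedding_Iio, sum_map]
  rfl

theorem card_maximal (m : ℕ) :
    (#{α ∈ involutions (Fin (m + 1)) | ∀ x y, (finRotate (m + 1) * α).SameCycle x y} : ℤ) =
      evenBinomialTransform maximalCoeff (m + 1) := by
  rw [card_transitive_eq_sum_totalWeight _ 0, sum_totalWeight_eq, card_involutions,
    Fintype.card_fin, ← evenBinomialTransform_numMatchings_sub_eq, sub_eq_add_neg, add_right_inj]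
  let a (k : ℕ) : ℤ := (-1) ^ k * numMatchings k
  let b (k : ℕ) : ℤ := numMatchings k
  calc ∑ e : Fin (m + 1), ∑ p ∈ Iio e, totalWeight (finRotate (m + 1)) (Ioc p e)
      = ∑ e : Fin (m + 1), ∑ p ∈ Iio e, -(evenBinomialTransform a (e - 1 - p) *
          evenBinomialTransform b (m - (e - 1 - p) - 1)) :=
        sum_congr rfl fun e _ => sum_congr rfl fun p hp => totalWeight_Ioc (mem_Iio.1 hp)
    _ = ∑ q ∈ antidiagonal m,
          q.2 * -(evenBinomialTransform a q.1 * evenBinomialTransform b (m - q.1 - 1)) :=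
        sum_fin_sum_Iio_eq_sum_antidiagonal
          (fun c => -(evenBinomialTransform a c * evenBinomialTransform b (m - c - 1))) m
    _ = -∑ q ∈ antidiagonal m,
          q.2 * (evenBinomialTransform a q.1 * evenBinomialTransform b (q.2 - 1)) := by
        rw [← sum_neg_distrib]
        refine sum_congr rfl fun q hq => ?_
        rw [mul_neg, ← mem_antidiagonal.1 hq, Nat.add_sub_cancel_left]
    _ = _ := by
        rw [sum_antidiagonal_evenBinomialTransform_mul]
        rfl

end Intervals

end MaximalQuasiDiagram

/-- Let `n ≥ 1` and write `n = 4t + q` with `0 ≤ q ≤ 3`.  Then the number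
of maximal quasi-diagrams in `S_n`, i.e. of involutions `α` of `Fin n` such that
`ζ_n α` (`ζ = finRotate n`) has exactly one orbit, equals `Σ_{i=0}^{t} C(n, 4i) ε_i`, where
`ε_i = (4i)! / (4^i * (2i+1)!)` (so `ε_0 = 1`). -/
theorem stmt_19 (n t q : ℕ) (hn : 0 < n) (hq : q ≤ 3) (hdec : n = 4 * t + q) :
    Nat.card {α : Equiv.Perm (Fin n) //
        (∀ i, α (α i) = i) ∧
          ∀ x y : Fin n, (finRotate n * α).SameCycle x y} =
      ∑ i ∈ Finset.range (t + 1),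
        n.choose (4 * i) * ((4 * i)! / (4 ^ i * (2 * i + 1)!)) := by
  obtain ⟨m, rfl⟩ := Nat.exists_eq_succ_of_ne_zero hn.ne'
  have ht : (m + 1) / 4 = t := by omega
  have hcard := MaximalQuasiDiagram.card_maximal m
  rw [MaximalQuasiDiagram.evenBinomialTransform_maximalCoeff, ht] at hcard
  rw [← Nat.cast_injective hcard]
  refine Nat.subtype_card _ fun α => ?_
  rw [Finset.mem_filter, MaximalQuasiDiagram.mem_involutions]
end
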